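/- arXiv:1511.03724 — 3 statements merged into one kernel-verified Lean document; each statement's English description precedes it below -/
import Mathlib

section
/- Let R > 0, M > 1 and δ ∈ (0, 1), and let λ be a function analytic on the open disk {z ∈ ℂ : |z| < 2eR} with λ(0) = 1 and |λ(z)| ≤ M for all |z| < 2eR. Then there exists a sequence of closed disks D_j = {z : |z − c_j| ≤ r_j} (c_j ∈ ℂ, r_j ≥ 0) with Σ_j r_j ≤ e⁶·R·δ^{1/log M} such that {z ∈ ℂ : |z| < R and |λ(z)| < δ} ⊆ ⋃_j D_j (log denotes the natural logarithm). -/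
/-! Write `F = ∏ (z - aᵢ) * g` on the large disk, where `aᵢ` are the zeros of `F` in `|z| ≤ 2R`.
Replacing each `z - aᵢ` by the linear factor `(ρ² - conj aᵢ * z) / ρ`, which has the same modulus on
`|z| = ρ`, keeps the bound `M` by the maximum principle. At the origin, with `ρ → 2eR`, this gives
Jensen's bound `n ≤ log M` for the number of zeros. With `ρ = 2R` the new function has no zeros in
`|z| < 2R`, so its logarithm is holomorphic there and the Borel–Carathéodory inequality bounds it
below by `M⁻²` on `|z| ≤ R`. It remains to bound `∏ |z - aᵢ|` below. Following Cartan, a point `z`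
such that fewer than `k` of the `aᵢ` lie within `kε` of `z`, for every `k > 0`, satisfies
`∏ |z - aᵢ| ≥ n! εⁿ`; the other points lie in disks of radius `kε` containing at least `k` of the
`aᵢ`, and a Vitali subfamily of these, enlarged five times, has total radius at most `5nε`. -/

open Metric Filter
open scoped Finset Nat Topology ComplexConjugate

section BallCover

variable {α : Type*} [PseudoMetricSpace α]

/-- `s` is covered by a sequence of closed balls of total radius at most `ℓ`. Nonnegative radii are
required, since a negative radius would lower the total at no cost. -/
def HasBallCover (s : Set α) (ℓ : ℝ) : Prop :=
  ∃ (c : ℕ → α) (r : ℕ → ℝ), (∀ j, 0 ≤ r j) ∧ Summable r ∧ ∑' j, r j ≤ ℓ ∧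
    s ⊆ ⋃ j, closedBall (c j) (r j)

theorem HasBallCover.mono {s t : Set α} {ℓ ℓ' : ℝ} (h : HasBallCover t ℓ) (hst : s ⊆ t)
    (hℓ : ℓ ≤ ℓ') : HasBallCover s ℓ' := by
  obtain ⟨c, r, hr, hsum, hle, hcov⟩ := h
  exact ⟨c, r, hr, hsum, hle.trans hℓ, hst.trans hcov⟩

theorem hasBallCover_iUnion_closedBall [Nonempty α] {ι : Type*} [Countable ι] (c : ι → α)
    {r : ι → ℝ} {ℓ : ℝ} (hr : 0 ≤ r) (hsum : HasSum r ℓ) :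
    HasBallCover (⋃ i, closedBall (c i) (r i)) ℓ := by
  obtain ⟨g, hg⟩ := exists_injective_nat ι
  have hsum' := (hasSum_extend_zero hg).mpr hsum
  refine ⟨Function.extend g c fun _ => Classical.arbitrary α, Function.extend g r 0,
    Function.extend_nonneg hr le_rfl, hsum'.summable, hsum'.tsum_eq.le,
    Set.iUnion_subset fun i => ?_⟩
  refine Set.subset_iUnion_of_subset (g i) ?_
  rw [hg.extend_apply, hg.extend_apply]

theorem hasBallCover_closedBall (x : α) {r : ℝ} (hr : 0 ≤ r) :
    HasBallCover (closedBall x r) r := by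
  have : Nonempty α := ⟨x⟩
  simpa [Set.iUnion_const] using hasBallCover_iUnion_closedBall (fun _ : Unit => x)
    (r := fun _ => r) (fun _ => hr) (hasSum_fintype _)

end BallCover

section Factorial

theorem factorial_mul_pow_le_prod {ι K : Type*} [CommSemiring K] [LinearOrder K]
    [IsStrictOrderedRing K] {ε : K} (hε : 0 ≤ ε) (d : ι → K) (s : Finset ι)
    (h : ∀ k : ℕ, 0 < k → #{i ∈ s | d i ≤ k * ε} < k) : (#s)! * ε ^ #s ≤ ∏ i ∈ s, d i := by
  classical
  induction hn : #s generalizing s with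
  | zero => simp [Finset.card_eq_zero.mp hn]
  | succ n ih =>
    obtain ⟨i, his, hi⟩ : ∃ i ∈ s, (n + 1 : ℕ) * ε < d i := by
      by_contra! hle
      have := h (n + 1) n.succ_pos
      rw [Finset.filter_true_of_mem hle] at this
      exact this.ne hn
    have herase (k : ℕ) : #{j ∈ s.erase i | d j ≤ k * ε} ≤ #{j ∈ s | d j ≤ k * ε} :=
      Finset.card_le_card (Finset.filter_subset_filter _ (s.erase_subset i))
    have ih' : n ! * ε ^ n ≤ ∏ j ∈ s.erase i, d j :=
      ih (s.erase i) (fun k hk => (herase k).trans_lt (h k hk))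
        (by rw [Finset.card_erase_of_mem his, hn, Nat.add_sub_cancel])
    calc ((n + 1)! : K) * ε ^ (n + 1) = ((n + 1 : ℕ) * ε) * (n ! * ε ^ n) := by
          rw [Nat.factorial_succ]; push_cast; ring
      _ ≤ d i * ∏ j ∈ s.erase i, d j :=
          mul_le_mul hi.le ih' (by positivity) (le_trans (by positivity) hi.le)
      _ = ∏ j ∈ s, d j := Finset.mul_prod_erase s d his

theorem div_exp_one_pow_le_factorial (n : ℕ) : (n / Real.exp 1) ^ n ≤ n ! := by
  rw [div_pow, ← Real.exp_nat_mul, mul_one, div_le_comm₀ (Real.exp_pos _) (by positivity)]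
  exact Real.pow_div_factorial_le_exp _ n.cast_nonneg n

end Factorial

section CartanProduct

variable {α ι : Type*} [PseudoMetricSpace α] [Fintype ι] {a : ι → α} {ε : ℝ}

/-- The pairs `(x, k)`, `k > 0`, such that the closed ball of radius `k * ε` around `x` contains at
least `k` of the points `a i`: the exceptional balls in Cartan's lemma. -/
def crowdedBalls (a : ι → α) (ε : ℝ) : Set (α × ℕ) :=
  {p | 0 < p.2 ∧ p.2 ≤ #{i | dist (a i) p.1 ≤ p.2 * ε}}

theorem sum_snd_le_card_of_subset_crowdedBalls {v : Finset (α × ℕ)} (hv : ↑v ⊆ crowdedBalls a ε)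
    (hdisj : (v : Set (α × ℕ)).PairwiseDisjoint fun p => closedBall p.1 (p.2 * ε)) :
    ∑ p ∈ v, p.2 ≤ Fintype.card ι := by
  classical
  let S (p : α × ℕ) : Finset ι := {i | dist (a i) p.1 ≤ p.2 * ε}
  have hS : (v : Set (α × ℕ)).PairwiseDisjoint S := fun p hp q hq hpq =>
    Finset.disjoint_left.mpr fun i hip hiq =>
      (Set.disjoint_left.mp (hdisj hp hq hpq)) (a := a i) (by simpa [S] using hip)
        (by simpa [S] using hiq)
  calc ∑ p ∈ v, p.2 ≤ ∑ p ∈ v, #(S p) := Finset.sum_le_sum fun p hp => (hv hp).2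
    _ = #(v.biUnion S) := (Finset.card_biUnion hS).symm
    _ ≤ Fintype.card ι := Finset.card_le_univ _

theorem finite_of_subset_crowdedBalls {u : Set (α × ℕ)} (hu : u ⊆ crowdedBalls a ε)
    (hdisj : u.PairwiseDisjoint fun p => closedBall p.1 (p.2 * ε)) : u.Finite := by
  by_contra hinf
  obtain ⟨v, hvu, hv⟩ := Set.Infinite.exists_subset_card_eq hinf (Fintype.card ι + 1)
  have hle := sum_snd_le_card_of_subset_crowdedBalls (hvu.trans hu) (hdisj.subset hvu)
  have hcard : #v ≤ ∑ p ∈ v, p.2 := by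
    simpa using Finset.card_nsmul_le_sum v Prod.snd 1 fun p hp => (hu (hvu hp)).1
  omega

theorem hasBallCover_iUnion_crowdedBalls [Nonempty α] (a : ι → α) (hε : 0 ≤ ε) :
    HasBallCover (⋃ p ∈ crowdedBalls a ε, closedBall p.1 (p.2 * ε))
      (5 * (Fintype.card ι * ε)) := by
  have hrad (p) (hp : p ∈ crowdedBalls a ε) : p.2 * ε ≤ Fintype.card ι * ε := by
    gcongr
    exact hp.2.trans (Finset.card_le_univ _)
  obtain ⟨u, hu, hdisj, hcov⟩ := Vitali.exists_disjoint_subfamily_covering_enlargement_closedBall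
    (crowdedBalls a ε) Prod.fst (fun p => p.2 * ε) _ hrad 5 (by norm_num)
  lift u to Finset (α × ℕ) using finite_of_subset_crowdedBalls hu hdisj
  refine (hasBallCover_iUnion_closedBall (fun p : u => p.1.1) (r := fun p : u => 5 * (p.1.2 * ε))
    (fun p => by positivity) (hasSum_fintype _)).mono (Set.iUnion₂_subset fun p hp => ?_) ?_
  · obtain ⟨q, hq, hpq⟩ := hcov p hp
    exact hpq.trans (Set.subset_iUnion_of_subset ⟨q, hq⟩ subset_rfl)
  · rw [← Finset.mul_sum, ← Finset.sum_mul, Finset.sum_coe_sort u fun p => (p.2 : ℝ)]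
    gcongr
    exact_mod_cast sum_snd_le_card_of_subset_crowdedBalls hu hdisj

theorem factorial_mul_pow_le_prod_dist (hε : 0 ≤ ε) {z : α}
    (hz : z ∉ ⋃ p ∈ crowdedBalls a ε, closedBall p.1 (p.2 * ε)) :
    (Fintype.card ι)! * ε ^ Fintype.card ι ≤ ∏ i, dist (a i) z := by
  refine factorial_mul_pow_le_prod hε (fun i => dist (a i) z) Finset.univ fun k hk => ?_
  by_contra! hcrowded
  exact hz (Set.mem_iUnion₂_of_mem (i := (z, k)) ⟨hk, hcrowded⟩
    (mem_closedBall_self (by positivity)))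

theorem hasBallCover_setOf_prod_dist_lt [Nonempty α] (a : ι → α) {H : ℝ} (hH : 0 ≤ H) :
    HasBallCover {z | ∏ i, dist (a i) z < (H / Real.exp 1) ^ Fintype.card ι} (5 * H) := by
  set n := Fintype.card ι with hn
  have hε : 0 ≤ H / n := by positivity
  refine (hasBallCover_iUnion_crowdedBalls a hε).mono (fun z hz => ?_) ?_
  · by_contra hmem
    refine (show ∏ i, dist (a i) z < (H / Real.exp 1) ^ n from hz).not_ge ?_
    calc (H / Real.exp 1) ^ n = (n / Real.exp 1) ^ n * (H / n) ^ n := by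
          rcases n.eq_zero_or_pos with h0 | hpos
          · simp [h0]
          · rw [← mul_pow]; field_simp
      _ ≤ n ! * (H / n) ^ n := by gcongr; exact div_exp_one_pow_le_factorial n
      _ ≤ ∏ i, dist (a i) z := factorial_mul_pow_le_prod_dist hε hmem
  · rw [← hn]
    gcongr
    rw [mul_div_left_comm]
    exact mul_le_of_le_one_right hH (div_self_le_one _)

end CartanProduct

section NonvanishingFunctions

open Complex

theorem exists_differentiableOn_exp_eqOn_ball {f : ℂ → ℂ} {c : ℂ} {r : ℝ}
    (hf : DifferentiableOn ℂ f (ball c r)) (hne : ∀ z ∈ ball c r, f z ≠ 0) :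
    ∃ h : ℂ → ℂ, DifferentiableOn ℂ h (ball c r) ∧ Set.EqOn f (fun z => exp (h z)) (ball c r) := by
  obtain ⟨h, hc, hderiv⟩ := ((hf.deriv isOpen_ball).div hf hne).isExactOn_ball.with_val_at c
    (log (f c))
  refine ⟨h, fun z hz => (hderiv z hz).differentiableAt.differentiableWithinAt, fun z hz => ?_⟩
  have hquot (w) (hw : w ∈ ball c r) : HasDerivAt (fun w => f w * exp (-h w)) 0 w := by
    refine ((hf.differentiableAt (isOpen_ball.mem_nhds hw)).hasDerivAt.mul
      (hderiv w hw).neg.cexp).congr_deriv ?_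
    have := hne w hw
    simp only [Pi.neg_apply, Pi.div_apply]
    field_simp
    ring
  have hcball : c ∈ ball c r := mem_ball_self (pos_of_mem_ball hz)
  have hconst : f z * exp (-h z) = f c * exp (-h c) :=
    isOpen_ball.is_const_of_deriv_eq_zero (convex_ball c r).isPreconnected
      (fun w hw => (hquot w hw).differentiableAt.differentiableWithinAt)
      (fun w hw => (hquot w hw).deriv) hz hcball
  rwa [hc, exp_neg (log _), exp_log (hne c hcball), mul_inv_cancel₀ (hne c hcball), exp_neg,
    mul_inv_eq_one₀ (exp_ne_zero _)] at hconst

theorem rpow_neg_le_norm_of_forall_ne_zero {f : ℂ → ℂ} {r M : ℝ} (hM : 1 < M)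
    (hf : DifferentiableOn ℂ f (ball 0 r)) (hne : ∀ z ∈ ball (0 : ℂ) r, f z ≠ 0)
    (hbd : ∀ z ∈ ball (0 : ℂ) r, ‖f z‖ ≤ M) (h0 : 1 ≤ ‖f 0‖) {z : ℂ} (hz : z ∈ ball (0 : ℂ) r) :
    M ^ (-(2 * ‖z‖ / (r - ‖z‖))) ≤ ‖f z‖ := by
  have hM0 : 0 < M := zero_lt_one.trans hM
  have hr : 0 < r := pos_of_mem_ball hz
  obtain ⟨h, hh, hexp⟩ := exists_differentiableOn_exp_eqOn_ball hf hne
  have hnorm (w) (hw : w ∈ ball (0 : ℂ) r) : ‖f w‖ = Real.exp (h w).re := by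
    rw [hexp hw, norm_exp]
  have hre0 : 0 ≤ (h 0).re := by
    rwa [hnorm 0 (mem_ball_self hr), Real.one_le_exp_iff] at h0
  have hre (w) (hw : w ∈ ball (0 : ℂ) r) : (h w - h 0).re ≤ Real.log M := by
    have := hbd w hw
    rw [hnorm w hw, ← Real.le_log_iff_exp_le hM0] at this
    rw [sub_re]
    linarith
  have hBC : ‖h z - h 0‖ ≤ 2 * Real.log M * ‖z‖ / (r - ‖z‖) :=
    borelCaratheodory_zero (f := fun w => h w - h 0) (Real.log_pos hM) (hh.sub_const _) hre hr hz
      (sub_self _)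
  rw [hnorm z hz, Real.rpow_def_of_pos hM0, Real.exp_le_exp]
  calc Real.log M * -(2 * ‖z‖ / (r - ‖z‖)) = -(2 * Real.log M * ‖z‖ / (r - ‖z‖)) := by ring
    _ ≤ -‖h z - h 0‖ := neg_le_neg hBC
    _ ≤ (h z - h 0).re := neg_le_of_abs_le (abs_re_le_norm _)
    _ ≤ (h z).re := by rw [sub_re]; linarith

end NonvanishingFunctions

section MirrorFactor

variable {ρ : ℝ} {a z : ℂ}

/-- The linear factor `z - a` with its zero reflected across the circle of radius `ρ`, scaled to
keep its modulus on that circle. It is `Complex.canonicalFactor ρ a z * (z - a)` with the removable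
singularity at `a` filled in. -/
noncomputable def mirrorFactor (ρ : ℝ) (a z : ℂ) : ℂ :=
  (ρ ^ 2 - conj a * z) / ρ

theorem differentiable_mirrorFactor (ρ : ℝ) (a : ℂ) : Differentiable ℂ (mirrorFactor ρ a) := by
  unfold mirrorFactor
  fun_prop

theorem mirrorFactor_zero_right (ρ : ℝ) (a : ℂ) : mirrorFactor ρ a 0 = ρ := by
  simp [mirrorFactor, sq]

theorem norm_mirrorFactor_of_mem_sphere (hρ : 0 < ρ) (hz : z ∈ sphere (0 : ℂ) ρ) :
    ‖mirrorFactor ρ a z‖ = ‖z - a‖ := by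
  rw [mem_sphere_zero_iff_norm] at hz
  have hnum : (ρ : ℂ) ^ 2 - conj a * z = conj (z - a) * z := by
    rw [← hz, ← Complex.conj_mul', map_sub, sub_mul]
  rw [mirrorFactor, hnum, norm_div, norm_mul, Complex.norm_conj, hz, Complex.norm_real,
    Real.norm_of_nonneg hρ.le, mul_div_cancel_right₀ _ hρ.ne']

theorem mirrorFactor_ne_zero (ha : ‖a‖ ≤ ρ) (hz : ‖z‖ < ρ) : mirrorFactor ρ a z ≠ 0 := by
  have hρ : 0 < ρ := (norm_nonneg z).trans_lt hz
  have hlt : ‖conj a * z‖ < ‖(ρ : ℂ) ^ 2‖ := by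
    rw [norm_mul, Complex.norm_conj, norm_pow, Complex.norm_real, Real.norm_of_nonneg hρ.le, sq]
    exact mul_lt_mul' ha hz (norm_nonneg z) hρ
  exact div_ne_zero (sub_ne_zero.mpr fun h => hlt.ne' (congrArg norm h))
    (Complex.ofReal_ne_zero.mpr hρ.ne')

theorem norm_mirrorFactor_le (hρ : 0 < ρ) (ha : ‖a‖ ≤ ρ) : ‖mirrorFactor ρ a z‖ ≤ ρ + ‖z‖ := by
  rw [mirrorFactor, norm_div, Complex.norm_real, Real.norm_of_nonneg hρ.le, div_le_iff₀ hρ]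
  calc ‖(ρ : ℂ) ^ 2 - conj a * z‖ ≤ ‖(ρ : ℂ) ^ 2‖ + ‖conj a * z‖ := norm_sub_le _ _
    _ = ρ ^ 2 + ‖a‖ * ‖z‖ := by
        rw [norm_mul, Complex.norm_conj, norm_pow, Complex.norm_real, Real.norm_of_nonneg hρ.le]
    _ ≤ ρ ^ 2 + ρ * ‖z‖ := by gcongr
    _ = (ρ + ‖z‖) * ρ := by ring

end MirrorFactor

section ZeroFactorization

variable {f g : ℂ → ℂ} {U K : Set ℂ} {ι : Type*} [Fintype ι] {a : ι → ℂ} {r s ρ M : ℝ} {z : ℂ}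

/-- On `U`, the function `f` is the product of linear factors vanishing at the points `a i` of `K`
and of a holomorphic cofactor `g`, which may itself have zeros. -/
structure IsZeroFactorization (f : ℂ → ℂ) (U K : Set ℂ) (a : ι → ℂ) (g : ℂ → ℂ) : Prop where
  mem (i : ι) : a i ∈ K
  differentiableOn : DifferentiableOn ℂ g U
  eqOn : Set.EqOn f (fun z => (∏ i, (z - a i)) * g z) U

namespace IsZeroFactorization

theorem of_isEmpty [IsEmpty ι] (hf : DifferentiableOn ℂ f U) : IsZeroFactorization f U K a f :=
  ⟨isEmptyElim, hf, fun z _ => by simp⟩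

theorem cons {n : ℕ} {a : Fin n → ℂ} (h : IsZeroFactorization f U K a g) (hU : U ∈ 𝓝 z)
    (hz : z ∈ K) (hgz : g z = 0) :
    IsZeroFactorization f U K (Fin.cons z a : Fin (n + 1) → ℂ) (dslope g z) where
  mem := Fin.cases hz h.mem
  differentiableOn := (Complex.differentiableOn_dslope hU).mpr h.differentiableOn
  eqOn w hw := by
    have hg : g w = (w - z) * dslope g z w := by
      simpa [hgz] using (sub_smul_dslope g z w).symm
    simp only [h.eqOn hw, Fin.prod_univ_succ, Fin.cons_zero, Fin.cons_succ]
    rw [hg]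
    ring

theorem exists_forall_ne_zero (hU : IsOpen U) (hKU : K ⊆ U) (hf : DifferentiableOn ℂ f U) {N : ℕ}
    (hN : ∀ (n : ℕ) (a : Fin n → ℂ) (g : ℂ → ℂ), IsZeroFactorization f U K a g → n ≤ N) :
    ∃ (n : ℕ) (a : Fin n → ℂ) (g : ℂ → ℂ), IsZeroFactorization f U K a g ∧ ∀ z ∈ K, g z ≠ 0 := by
  by_contra! hzero
  have hall (n : ℕ) : ∃ (a : Fin n → ℂ) (g : ℂ → ℂ), IsZeroFactorization f U K a g := by
    induction n with
    | zero => exact ⟨Fin.elim0, f, of_isEmpty hf⟩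
    | succ n ih =>
      obtain ⟨a, g, h⟩ := ih
      obtain ⟨z, hz, hgz⟩ := hzero n a g h
      exact ⟨_, _, h.cons (hU.mem_nhds (hKU hz)) hz hgz⟩
  obtain ⟨a, g, h⟩ := hall (N + 1)
  exact (hN _ a g h).not_gt N.lt_succ_self

theorem norm_prod_mirrorFactor_mul_le (h : IsZeroFactorization f U K a g) (hρ : 0 < ρ)
    (hU : closedBall 0 ρ ⊆ U) (hbd : ∀ z ∈ sphere (0 : ℂ) ρ, ‖f z‖ ≤ M)
    (hz : z ∈ closedBall (0 : ℂ) ρ) : ‖(∏ i, mirrorFactor ρ (a i) z) * g z‖ ≤ M := by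
  have hdiff : DifferentiableOn ℂ (fun z => (∏ i, mirrorFactor ρ (a i) z) * g z) U := by
    refine DifferentiableOn.mul ?_ h.differentiableOn
    exact (Differentiable.fun_finsetProd fun i _ =>
      differentiable_mirrorFactor ρ (a i)).differentiableOn
  refine Complex.norm_le_of_forall_mem_frontier_norm_le isBounded_ball (hdiff.diffContOnCl_ball hU)
    (fun w hw => ?_) (by rwa [closure_ball _ hρ.ne'])
  rw [frontier_ball _ hρ.ne'] at hw
  calc ‖(∏ i, mirrorFactor ρ (a i) w) * g w‖ = ‖(∏ i, (w - a i)) * g w‖ := by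
        simp only [norm_mul, norm_prod, norm_mirrorFactor_of_mem_sphere hρ hw]
    _ = ‖f w‖ := by rw [h.eqOn (hU (sphere_subset_closedBall hw))]
    _ ≤ M := hbd w hw

theorem norm_mul_div_pow_le_norm_prod_mirrorFactor_mul
    (h : IsZeroFactorization f U (closedBall 0 s) a g) (h0 : 0 ∈ U) (hρ : 0 ≤ ρ) :
    ‖f 0‖ * (ρ / s) ^ Fintype.card ι ≤ ‖(∏ i, mirrorFactor ρ (a i) 0) * g 0‖ := by
  have hfactor (i : ι) : ‖a i‖ * (ρ / s) ≤ ρ := by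
    have hi : ‖a i‖ ≤ s := mem_closedBall_zero_iff.mp (h.mem i)
    rw [mul_div_left_comm]
    exact mul_le_of_le_one_right hρ (div_le_one_of_le₀ hi ((norm_nonneg _).trans hi))
  calc ‖f 0‖ * (ρ / s) ^ Fintype.card ι = (∏ i, ‖a i‖ * (ρ / s)) * ‖g 0‖ := by
        rw [h.eqOn h0, Finset.prod_mul_distrib, Finset.prod_const, Finset.card_univ]
        simp only [zero_sub, norm_mul, norm_prod, norm_neg]
        ring
    _ ≤ (∏ _i : ι, ρ) * ‖g 0‖ := by
        gcongr with i
        · intro i _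
          have := (norm_nonneg (a i)).trans (mem_closedBall_zero_iff.mp (h.mem i))
          positivity
        · exact hfactor i
    _ = ‖(∏ i, mirrorFactor ρ (a i) 0) * g 0‖ := by
        simp [mirrorFactor_zero_right, abs_of_nonneg hρ]

theorem norm_mul_div_pow_card_le
    (h : IsZeroFactorization f (ball 0 r) (closedBall 0 s) a g) (hr : 0 < r)
    (hbd : ∀ z ∈ ball (0 : ℂ) r, ‖f z‖ ≤ M) : ‖f 0‖ * (r / s) ^ Fintype.card ι ≤ M := by
  have hlim : Tendsto (fun ρ => ‖f 0‖ * (ρ / s) ^ Fintype.card ι) (𝓝[<] r)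
      (𝓝 (‖f 0‖ * (r / s) ^ Fintype.card ι)) :=
    Continuous.continuousWithinAt (by fun_prop)
  refine le_of_tendsto hlim ?_
  filter_upwards [Ioo_mem_nhdsLT hr] with ρ hρ
  exact (h.norm_mul_div_pow_le_norm_prod_mirrorFactor_mul (mem_ball_self hr) hρ.1.le).trans
    (h.norm_prod_mirrorFactor_mul_le hρ.1 (closedBall_subset_ball hρ.2)
      (fun z hz => hbd z (sphere_subset_ball hρ.2 hz)) (mem_closedBall_self hρ.1.le))

theorem card_le_log_div_log (h : IsZeroFactorization f (ball 0 r) (closedBall 0 s) a g)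
    (hs : 0 < s) (hsr : s < r) (hbd : ∀ z ∈ ball (0 : ℂ) r, ‖f z‖ ≤ M) (h0 : 1 ≤ ‖f 0‖) :
    Fintype.card ι ≤ Real.log M / Real.log (r / s) := by
  have hrs : 0 < r / s := div_pos (hs.trans hsr) hs
  have hpow : (r / s) ^ Fintype.card ι ≤ M :=
    (le_mul_of_one_le_left (pow_nonneg hrs.le _) h0).trans
      (h.norm_mul_div_pow_card_le (hs.trans hsr) hbd)
  rw [le_div_iff₀ (Real.log_pos ((one_lt_div hs).mpr hsr)), ← Real.log_pow]
  exact Real.log_le_log (pow_pos hrs _) hpow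

theorem rpow_neg_mul_prod_le_norm (h : IsZeroFactorization f U (closedBall 0 s) a g)
    (hU : closedBall 0 s ⊆ U) (hg : ∀ z ∈ closedBall (0 : ℂ) s, g z ≠ 0) (hM : 1 < M)
    (hbd : ∀ z ∈ sphere (0 : ℂ) s, ‖f z‖ ≤ M) (h0 : 1 ≤ ‖f 0‖) (hz : z ∈ ball (0 : ℂ) s) :
    M ^ (-(2 * ‖z‖ / (s - ‖z‖))) * ∏ i, (‖z - a i‖ / (s + ‖z‖)) ≤ ‖f z‖ := by
  have hs : 0 < s := pos_of_mem_ball hz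
  have ha (i : ι) : ‖a i‖ ≤ s := mem_closedBall_zero_iff.mp (h.mem i)
  have hsub : ball (0 : ℂ) s ⊆ U := ball_subset_closedBall.trans hU
  have hψ : M ^ (-(2 * ‖z‖ / (s - ‖z‖))) ≤ ‖(∏ i, mirrorFactor s (a i) z) * g z‖ := by
    refine rpow_neg_le_norm_of_forall_ne_zero (f := fun w => (∏ i, mirrorFactor s (a i) w) * g w)
      hM ?_ (fun w hw => ?_) (fun w hw => ?_) ?_ hz
    · exact (Differentiable.fun_finsetProd fun i _ =>
        differentiable_mirrorFactor s (a i)).differentiableOn.mul (h.differentiableOn.mono hsub)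
    · exact mul_ne_zero (Finset.prod_ne_zero_iff.mpr fun i _ =>
        mirrorFactor_ne_zero (ha i) (mem_ball_zero_iff.mp hw)) (hg w (ball_subset_closedBall hw))
    · exact h.norm_prod_mirrorFactor_mul_le hs hU hbd (ball_subset_closedBall hw)
    · refine h0.trans ?_
      simpa [div_self hs.ne'] using
        h.norm_mul_div_pow_le_norm_prod_mirrorFactor_mul (hU (mem_closedBall_self hs.le)) hs.le
  have hfactor (i : ι) : ‖mirrorFactor s (a i) z‖ * (‖z - a i‖ / (s + ‖z‖)) ≤ ‖z - a i‖ := by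
    rw [mul_div_left_comm]
    exact mul_le_of_le_one_right (norm_nonneg _)
      (div_le_one_of_le₀ (norm_mirrorFactor_le hs (ha i)) (by positivity))
  calc M ^ (-(2 * ‖z‖ / (s - ‖z‖))) * ∏ i, (‖z - a i‖ / (s + ‖z‖))
      ≤ ‖(∏ i, mirrorFactor s (a i) z) * g z‖ * ∏ i, (‖z - a i‖ / (s + ‖z‖)) := by gcongr
    _ = (∏ i, ‖mirrorFactor s (a i) z‖ * (‖z - a i‖ / (s + ‖z‖))) * ‖g z‖ := by
        rw [norm_mul, norm_prod, Finset.prod_mul_distrib]; ring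
    _ ≤ (∏ i, ‖z - a i‖) * ‖g z‖ := by
        gcongr with i
        exact hfactor i
    _ = ‖f z‖ := by rw [h.eqOn (hsub hz), norm_mul, norm_prod]

end IsZeroFactorization

end ZeroFactorization

section Sublevel

variable {f : ℂ → ℂ} {R s r M : ℝ}

theorem exists_isZeroFactorization_card_le (hs : 0 < s) (hsr : s < r)
    (hf : DifferentiableOn ℂ f (ball 0 r)) (hbd : ∀ z ∈ ball (0 : ℂ) r, ‖f z‖ ≤ M)
    (h0 : 1 ≤ ‖f 0‖) :
    ∃ (n : ℕ) (a : Fin n → ℂ) (g : ℂ → ℂ), IsZeroFactorization f (ball 0 r) (closedBall 0 s) a g ∧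
      (∀ z ∈ closedBall (0 : ℂ) s, g z ≠ 0) ∧ n ≤ Real.log M / Real.log (r / s) := by
  have hcard (n : ℕ) (a : Fin n → ℂ) (g : ℂ → ℂ)
      (h : IsZeroFactorization f (ball 0 r) (closedBall 0 s) a g) :
      n ≤ Real.log M / Real.log (r / s) := by
    simpa using h.card_le_log_div_log hs hsr hbd h0
  obtain ⟨n, a, g, h, hg⟩ := IsZeroFactorization.exists_forall_ne_zero isOpen_ball
    (closedBall_subset_ball hsr) hf fun n a g h => Nat.le_floor (hcard n a g h)
  exact ⟨n, a, g, h, hg, hcard n a g h⟩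

theorem hasBallCover_setOf_norm_lt (hR : 0 ≤ R) (hRs : R < s) (hsr : s < r) (hM : 1 < M)
    (hf : DifferentiableOn ℂ f (ball 0 r)) (hbd : ∀ z ∈ ball (0 : ℂ) r, ‖f z‖ ≤ M)
    (h0 : 1 ≤ ‖f 0‖) {H : ℝ} (hH : 0 ≤ H) :
    HasBallCover {z | ‖z‖ ≤ R ∧ ‖f z‖ < M ^ (-(2 * R / (s - R))) *
      (H / (Real.exp 1 * (s + R))) ^ (Real.log M / Real.log (r / s))} (5 * H) := by
  have hs : 0 < s := hR.trans_lt hRs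
  rcases lt_or_ge (Real.exp 1 * (s + R)) H with hlarge | hsmall
  · have hRH : R ≤ 5 * H := by nlinarith [Real.add_one_le_exp 1]
    exact (hasBallCover_closedBall 0 hR).mono (fun z hz => mem_closedBall_zero_iff.mpr hz.1) hRH
  obtain ⟨n, a, g, h, hg, hn⟩ := exists_isZeroFactorization_card_le hs hsr hf hbd h0
  refine (hasBallCover_setOf_prod_dist_lt a hH).mono (fun z ⟨hzR, hfz⟩ => ?_) le_rfl
  contrapose! hfz
  have hprod : (H / Real.exp 1) ^ n ≤ ∏ i, ‖z - a i‖ := by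
    simpa [dist_eq_norm'] using hfz
  calc M ^ (-(2 * R / (s - R))) *
        (H / (Real.exp 1 * (s + R))) ^ (Real.log M / Real.log (r / s))
      ≤ M ^ (-(2 * ‖z‖ / (s - ‖z‖))) * (H / (Real.exp 1 * (s + R))) ^ (n : ℝ) := by
        gcongr ?_ * ?_
        · refine Real.rpow_le_rpow_of_exponent_le hM.le (neg_le_neg ?_)
          gcongr
        · exact Real.rpow_le_rpow_of_exponent_ge' (by positivity)
            (div_le_one_of_le₀ hsmall (by positivity)) n.cast_nonneg hn
    _ = M ^ (-(2 * ‖z‖ / (s - ‖z‖))) * ((H / Real.exp 1) ^ n / (s + R) ^ n) := by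
        rw [Real.rpow_natCast, ← div_pow, div_div]
    _ ≤ M ^ (-(2 * ‖z‖ / (s - ‖z‖))) * ((∏ i, ‖z - a i‖) / (s + ‖z‖) ^ n) := by gcongr
    _ = M ^ (-(2 * ‖z‖ / (s - ‖z‖))) * ∏ i, (‖z - a i‖ / (s + ‖z‖)) := by simp
    _ ≤ ‖f z‖ := h.rpow_neg_mul_prod_le_norm (closedBall_subset_ball hsr) hg hM
        (fun w hw => hbd w (sphere_subset_ball hsr hw)) h0
        (mem_ball_zero_iff.mpr (hzR.trans_lt hRs))

theorem fifteen_le_exp_three : 15 ≤ Real.exp 3 :=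
  calc (15 : ℝ) ≤ 2.7182818283 ^ 3 := by norm_num
    _ ≤ Real.exp 1 ^ 3 := by gcongr; exact Real.exp_one_gt_d9.le
    _ = Real.exp 3 := by rw [← Real.exp_nat_mul]; norm_num

theorem rpow_neg_two_mul_exp_two_mul_rpow {δ : ℝ} (hM : 1 < M) (hδ : 0 < δ) :
    M ^ (-2 : ℝ) * (Real.exp 2 * δ ^ (1 / Real.log M)) ^ Real.log M = δ := by
  have hM0 : 0 < M := zero_lt_one.trans hM
  have hexp : Real.exp 2 ^ Real.log M = M ^ (2 : ℝ) := by
    rw [← Real.exp_mul, mul_comm, ← Real.rpow_def_of_pos hM0]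
  have hδpow : (δ ^ (1 / Real.log M)) ^ Real.log M = δ := by
    rw [← Real.rpow_mul hδ.le, one_div_mul_cancel (Real.log_pos hM).ne', Real.rpow_one]
  rw [Real.mul_rpow (by positivity) (by positivity), hexp, hδpow, ← mul_assoc,
    ← Real.rpow_add hM0, neg_add_cancel, Real.rpow_zero, one_mul]

theorem stmt14_general {δ : ℝ} (hR : 0 < R) (hM : 1 < M) (hδ : 0 < δ)
    (hf : DifferentiableOn ℂ f (ball 0 (2 * Real.exp 1 * R))) (h0 : 1 ≤ ‖f 0‖)
    (hbd : ∀ z ∈ ball (0 : ℂ) (2 * Real.exp 1 * R), ‖f z‖ ≤ M) :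
    HasBallCover {z | ‖z‖ < R ∧ ‖f z‖ < δ} (Real.exp 6 * R * δ ^ (1 / Real.log M)) := by
  set t := δ ^ (1 / Real.log M) with ht
  have hradii : 2 * R < 2 * Real.exp 1 * R := by
    nlinarith [Real.one_lt_exp_iff.mpr one_pos]
  -- `H = 3e³Rt` makes the base `H / (e * 3R)` equal to `e² * t`, and `(e²) ^ log M` cancels `M⁻²`.
  have hthreshold : M ^ (-(2 * R / (2 * R - R))) * (3 * Real.exp 3 * R * t /
      (Real.exp 1 * (2 * R + R))) ^ (Real.log M / Real.log (2 * Real.exp 1 * R / (2 * R))) = δ := by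
    have hexponent : 2 * R / (2 * R - R) = 2 := by field_simp; ring
    have hbase : 3 * Real.exp 3 * R * t / (Real.exp 1 * (2 * R + R)) = Real.exp 2 * t := by
      rw [show (3 : ℝ) = 1 + 2 by norm_num, Real.exp_add]; field_simp; ring
    have hratio : 2 * Real.exp 1 * R / (2 * R) = Real.exp 1 := by field_simp
    rw [hexponent, hbase, hratio, Real.log_exp, div_one, ht,
      rpow_neg_two_mul_exp_two_mul_rpow hM hδ]
  refine (hasBallCover_setOf_norm_lt hR.le (s := 2 * R) (by linarith) hradii hM hf hbd h0
    (H := 3 * Real.exp 3 * R * t) (by positivity)).mono ?_ ?_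
  · rw [hthreshold]
    exact fun z hz => ⟨hz.1.le, hz.2⟩
  · calc 5 * (3 * Real.exp 3 * R * t) = 15 * (Real.exp 3 * R * t) := by ring
      _ ≤ Real.exp 3 * (Real.exp 3 * R * t) := by gcongr; exact fifteen_le_exp_three
      _ = Real.exp 6 * R * t := by
          rw [show (6 : ℝ) = 3 + 3 by norm_num, Real.exp_add]; ring

end Sublevel

/-- Cartan's lemma (covering form): if `λ` is analytic on the open disk of
radius `2eR`, `λ(0) = 1` and `|λ| ≤ M` there, then the sublevel set
`{|z| < R, |λ(z)| < δ}` can be covered by closed disks of total radius at most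
`e⁶·R·δ^{1/log M}`. -/
theorem stmt14 (R M δ : ℝ) (hR : 0 < R) (hM : 1 < M) (hδ0 : 0 < δ) (hδ1 : δ < 1)
    (F : ℂ → ℂ)
    (hF : DifferentiableOn ℂ F (Metric.ball (0 : ℂ) (2 * Real.exp 1 * R)))
    (hF0 : F 0 = 1)
    (hFbd : ∀ z ∈ Metric.ball (0 : ℂ) (2 * Real.exp 1 * R), ‖F z‖ ≤ M) :
    ∃ (c : ℕ → ℂ) (r : ℕ → ℝ), (∀ j, 0 ≤ r j) ∧ Summable r ∧
      (∑' j, r j) ≤ Real.exp 6 * R * δ ^ (1 / Real.log M) ∧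
      {z : ℂ | ‖z‖ < R ∧ ‖F z‖ < δ} ⊆
        ⋃ j, Metric.closedBall (c j) (r j) :=
  stmt14_general hR hM hδ0 hF (by simp [hF0]) hFbd
end

section
/- Fix real κ > 0 and η > 0. For every c > 1 and every a ∈ (0, 1/2) there exists f₀ > 0 such that for all f ∈ (0, f₀), all r > f^a and all z ∈ ℂ with |z| < r: |D_f(z)| ≤ (1/(2rη²))·exp(4c·r^{3/2}/(3f)). -/
/-!
Write `p = f ^ (1 / 3)` and `u = z / p ^ 2`, so that `|W| = p / (2π)` and `D_f` is an expression in
the values of the kernel `G(u, v) = Ai(-ω u) Ai(-v)` at the points `u ± κ p`. On the disk of radius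
`s ^ 2` every third term of the Airy series is dominated by the series of `cosh (2 / 3 * s ^ 3)`,
whence `|G| ≲ s ^ 4 exp (4 / 3 * s ^ 3)`.

The factor `1 / W ^ 2` is too singular for this bound alone, but `β₋ - β₊` is a cross difference
`y₁(u) y₂(v) - y₁(v) y₂(u)` of two solutions of `y'' = -z y`. As a function of `v` it solves the
same equation, vanishes at `v = u` and has the Wronskian, a constant, as its derivative there. By
Grönwall it is of order `p exp (2 |κ| s)`: the Airy growth enters only once, and one factor `p` is
gained. With `r = (p t) ^ 2` and `s = t + |κ| + 1`, the product `2 r η ^ 2 |D_f|` is therefore at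
most `p` times a polynomial in `s` times `exp (4 / 3 * s ^ 3 + 2 |κ| s)`. Because `c > 1`, this is
`O(p) exp (4 / 3 * c * t ^ 3)` uniformly in `t > 0`, hence at most `exp (4 / 3 * c * t ^ 3)` for
small `p`, and `t ^ 3 = r ^ (3 / 2) / f`.
-/

open Real

/-- Taylor coefficients of the Airy function `Ai`:
`a₀ = 3^{−2/3}/Γ(2/3)`, `a₁ = −3^{−1/3}/Γ(1/3)`, `a₂ = 0`,
`a_{k+3} = a_k/((k+3)(k+2))`. -/
noncomputable def airyCoeff : ℕ → ℂ
  | 0 => (3 : ℂ) ^ (-(2 : ℂ) / 3) / Complex.Gamma (2 / 3)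
  | 1 => -((3 : ℂ) ^ (-(1 : ℂ) / 3) / Complex.Gamma (1 / 3))
  | 2 => 0
  | (k + 3) => airyCoeff k / (((k : ℂ) + 3) * ((k : ℂ) + 2))

/-- The Airy function `Ai`, as the entire function with the above Taylor
coefficients at `0`. -/
noncomputable def Ai (z : ℂ) : ℂ := ∑' k : ℕ, airyCoeff k * z ^ k

/-- `ω = e^{2πi/3}` -/
noncomputable def ωc : ℂ := Complex.exp (2 * π * Complex.I / 3)

/-- `W = f^{1/3}·e^{−iπ/6}/(2π)` -/
noncomputable def Wf (f : ℝ) : ℂ :=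
  ((f ^ ((1 : ℝ) / 3) : ℝ) : ℂ) * Complex.exp (-(π : ℂ) * Complex.I / 6) / (2 * π)

/-- `α₊(z) = Ai(−ω(z − κf)f^{−2/3})·Ai(−(z − κf)f^{−2/3})` -/
noncomputable def alphaP (κ f : ℝ) (z : ℂ) : ℂ :=
  Ai (-ωc * (z - κ * f) * ((f ^ (-(2 : ℝ) / 3) : ℝ) : ℂ)) *
    Ai (-(z - κ * f) * ((f ^ (-(2 : ℝ) / 3) : ℝ) : ℂ))

/-- `α₋(z) = Ai(−ω(z + κf)f^{−2/3})·Ai(−(z + κf)f^{−2/3})` -/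
noncomputable def alphaM (κ f : ℝ) (z : ℂ) : ℂ :=
  Ai (-ωc * (z + κ * f) * ((f ^ (-(2 : ℝ) / 3) : ℝ) : ℂ)) *
    Ai (-(z + κ * f) * ((f ^ (-(2 : ℝ) / 3) : ℝ) : ℂ))

/-- `β₊(z) = Ai(−ω(z + κf)f^{−2/3})·Ai(−(z − κf)f^{−2/3})` -/
noncomputable def betaP (κ f : ℝ) (z : ℂ) : ℂ :=
  Ai (-ωc * (z + κ * f) * ((f ^ (-(2 : ℝ) / 3) : ℝ) : ℂ)) *
    Ai (-(z - κ * f) * ((f ^ (-(2 : ℝ) / 3) : ℝ) : ℂ))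

/-- `β₋(z) = Ai(−ω(z − κf)f^{−2/3})·Ai(−(z + κf)f^{−2/3})` -/
noncomputable def betaM (κ f : ℝ) (z : ℂ) : ℂ :=
  Ai (-ωc * (z - κ * f) * ((f ^ (-(2 : ℝ) / 3) : ℝ) : ℂ)) *
    Ai (-(z + κ * f) * ((f ^ (-(2 : ℝ) / 3) : ℝ) : ℂ))

/-- The resonance determinant `D_f` of the Stark Hamiltonian
`p² + fx + η⁻¹(δ_κ + δ_{−κ})`:
`D_f(z) = 1 + (α₊ + α₋)/(ηW) + β₊(β₋ − β₊)/(η²W²)`. -/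
noncomputable def Df (κ η f : ℝ) (z : ℂ) : ℂ :=
  1 + (alphaP κ f z + alphaM κ f z) / (η * Wf f)
    + betaP κ f z * (betaM κ f z - betaP κ f z) / (η ^ 2 * (Wf f) ^ 2)

open Set Filter Topology Polynomial

section LinearODE

theorem norm_le_of_norm_deriv_deriv_le {E : Type*} [NormedAddCommGroup E] [NormedSpace ℝ E]
    {g g' g'' : ℝ → E} {a b s : ℝ} (hab : a ≤ b) (hs : 0 ≤ s)
    (hg : ∀ t ∈ Icc a b, HasDerivAt g (g' t) t) (hg' : ∀ t ∈ Icc a b, HasDerivAt g' (g'' t) t)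
    (hbound : ∀ t ∈ Ico a b, ‖g'' t‖ ≤ s ^ 2 * ‖g t‖) (ha : g a = 0) :
    ‖g b‖ ≤ ‖g' a‖ * exp (s * (b - a)) * (b - a) := by
  -- The weight `s` makes the first order system for `(g', s • g)` Lipschitz with constant `s`.
  have hF (t) (ht : t ∈ Icc a b) :
      HasDerivAt (fun t ↦ (g' t, s • g t)) (g'' t, s • g' t) t :=
    (hg' t ht).prodMk ((hg t ht).const_smul s)
  have hFbound (t) (ht : t ∈ Ico a b) :
      ‖(g'' t, s • g' t)‖ ≤ s * ‖(g' t, s • g t)‖ + 0 := by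
    simp only [Prod.norm_def, norm_smul, norm_of_nonneg hs, add_zero]
    refine max_le ?_ (by gcongr; exact le_max_left _ _)
    calc ‖g'' t‖ ≤ s * (s * ‖g t‖) := by linarith [hbound t ht]
      _ ≤ s * max ‖g' t‖ (s * ‖g t‖) := by gcongr; exact le_max_right _ _
  have hg'_le (t) (ht : t ∈ Ico a b) : ‖g' t‖ ≤ ‖g' a‖ * exp (s * (b - a)) := by
    have hgronwall := norm_le_gronwallBound_of_norm_deriv_right_le (δ := ‖g' a‖)
      (fun t ht ↦ (hF t ht).continuousAt.continuousWithinAt)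
      (fun t ht ↦ (hF t (Ico_subset_Icc_self ht)).hasDerivWithinAt) (by simp [ha, Prod.norm_def])
      hFbound t (Ico_subset_Icc_self ht)
    rw [gronwallBound_ε0] at hgronwall
    have htb : t ≤ b := ht.2.le
    exact (norm_fst_le _).trans (hgronwall.trans (by gcongr))
  simpa [ha] using norm_image_sub_le_of_norm_deriv_le_segment'
    (fun t ht ↦ (hg t ht).hasDerivWithinAt) hg'_le b (right_mem_Icc.2 hab)

variable {𝕜 : Type*} [RCLike 𝕜] {p y y₁ y₂ : 𝕜 → 𝕜}

/-- `y` is a solution on all of `𝕜` of the linear second order equation `y'' = p y`; over `ℂ` such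
a `y` is entire. The Airy functions are the case `p z = z`, up to scaling. -/
structure IsLinearODESolution (p y : 𝕜 → 𝕜) : Prop where
  differentiable : Differentiable 𝕜 y
  hasDerivAt_deriv : ∀ z, HasDerivAt (deriv y) (p z * y z) z

/-- The Wronskian `y₁ y₂' - y₁' y₂` of two functions, which measures the linear independence of two
solutions of the same second order equation. -/
noncomputable def functionWronskian (y₁ y₂ : 𝕜 → 𝕜) (z : 𝕜) : 𝕜 :=
  y₁ z * deriv y₂ z - deriv y₁ z * y₂ z

namespace IsLinearODESolution

theorem hasDerivAt (h : IsLinearODESolution p y) (z : 𝕜) : HasDerivAt y (deriv y z) z :=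
  (h.differentiable z).hasDerivAt

theorem comp_mul_left (h : IsLinearODESolution p y) (c : 𝕜) :
    IsLinearODESolution (fun z ↦ c ^ 2 * p (c * z)) (fun z ↦ y (c * z)) where
  differentiable := h.differentiable.comp (differentiable_id.const_mul c)
  hasDerivAt_deriv z := by
    have hmul : HasDerivAt (fun z ↦ c * z) c z := by simpa using (hasDerivAt_id z).const_mul c
    have hderiv : deriv (fun z ↦ y (c * z)) = fun z ↦ c * deriv y (c * z) :=
      funext fun z ↦ deriv_comp_mul_left c y z
    rw [hderiv]
    exact (((h.hasDerivAt_deriv (c * z)).comp z hmul).const_mul c).congr_deriv (by ring)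

theorem functionWronskian_eq (h₁ : IsLinearODESolution p y₁) (h₂ : IsLinearODESolution p y₂)
    (z w : 𝕜) : functionWronskian y₁ y₂ z = functionWronskian y₁ y₂ w := by
  have hderiv (z) : HasDerivAt (functionWronskian y₁ y₂) 0 z :=
    (((h₁.hasDerivAt z).mul (h₂.hasDerivAt_deriv z)).sub
      ((h₁.hasDerivAt_deriv z).mul (h₂.hasDerivAt z))).congr_deriv (by ring)
  exact is_const_of_deriv_eq_zero (fun z ↦ (hderiv z).differentiableAt)
    (fun z ↦ (hderiv z).deriv) z w

-- As a function of `v` the cross difference solves `g'' = p g` with `g u = 0`, and `g' u` is the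
-- Wronskian; hence it does not inherit the growth of `y₁` and `y₂`.
theorem norm_cross_sub_le (h₁ : IsLinearODESolution p y₁) (h₂ : IsLinearODESolution p y₂)
    {u v : 𝕜} {s : ℝ} (hs : 0 ≤ s) (hp : ∀ w ∈ segment ℝ u v, ‖p w‖ ≤ s ^ 2) :
    ‖y₁ u * y₂ v - y₁ v * y₂ u‖
      ≤ ‖functionWronskian y₁ y₂ 0‖ * ‖v - u‖ * exp (s * ‖v - u‖) := by
  let l : ℝ → 𝕜 := AffineMap.lineMap u v
  have hl (t : ℝ) : HasDerivAt l (v - u) t := AffineMap.hasDerivAt_lineMap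
  have hg (t : ℝ) : HasDerivAt (fun t ↦ y₁ u * y₂ (l t) - y₁ (l t) * y₂ u)
      ((y₁ u * deriv y₂ (l t) - deriv y₁ (l t) * y₂ u) * (v - u)) t :=
    ((((h₂.hasDerivAt (l t)).comp t (hl t)).const_mul (y₁ u)).sub
      (((h₁.hasDerivAt (l t)).comp t (hl t)).mul_const (y₂ u))).congr_deriv (by ring)
  have hg' (t : ℝ) : HasDerivAt
      (fun t ↦ (y₁ u * deriv y₂ (l t) - deriv y₁ (l t) * y₂ u) * (v - u))
      (p (l t) * (v - u) ^ 2 * (y₁ u * y₂ (l t) - y₁ (l t) * y₂ u)) t :=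
    (((((h₂.hasDerivAt_deriv (l t)).comp t (hl t)).const_mul (y₁ u)).sub
      (((h₁.hasDerivAt_deriv (l t)).comp t (hl t)).mul_const (y₂ u))).mul_const
        (v - u)).congr_deriv (by ring)
  have hbound (t : ℝ) (ht : t ∈ Ico (0 : ℝ) 1) :
      ‖p (l t) * (v - u) ^ 2 * (y₁ u * y₂ (l t) - y₁ (l t) * y₂ u)‖
        ≤ (s * ‖v - u‖) ^ 2 * ‖y₁ u * y₂ (l t) - y₁ (l t) * y₂ u‖ := by
    have hpt : ‖p (l t)‖ ≤ s ^ 2 := hp _ <| by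
      rw [segment_eq_image_lineMap]
      exact mem_image_of_mem _ (Ico_subset_Icc_self ht)
    rw [norm_mul, norm_mul, norm_pow, mul_pow]
    gcongr
  have hmain := norm_le_of_norm_deriv_deriv_le zero_le_one (by positivity) (fun t _ ↦ hg t)
    (fun t _ ↦ hg' t) hbound (by simp [l])
  rw [h₁.functionWronskian_eq h₂ 0 u]
  simpa [l, functionWronskian] using hmain

end IsLinearODESolution

end LinearODE

section Airy

theorem airyCoeff_add_three (k : ℕ) :
    airyCoeff (k + 3) = airyCoeff k / (((k : ℂ) + 3) * ((k : ℂ) + 2)) := by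
  rw [airyCoeff]

theorem norm_airyCoeff_add_three (k : ℕ) :
    ‖airyCoeff (k + 3)‖ = ‖airyCoeff k‖ / (((k : ℝ) + 3) * ((k : ℝ) + 2)) := by
  have h (m : ℕ) : ‖(k : ℂ) + m‖ = k + m := by exact_mod_cast Complex.norm_natCast (k + m)
  rw [airyCoeff_add_three, norm_div, norm_mul]
  exact_mod_cast congrArg₂ (fun a b ↦ ‖airyCoeff k‖ / (a * b)) (h 3) (h 2)

-- `(3n + 3)(3n + 2) ≥ (9 / 4) (2n + 2)(2n + 1)`: every third Airy term is dominated by the series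
-- of `cosh` at `2 / 3 * s ^ 3`, the exponent of the asymptotics of `Ai` at `s ^ 2`.
theorem norm_airyCoeff_mul_pow_le (s : ℝ) (n j : ℕ) :
    ‖airyCoeff (3 * n + j)‖ * (s ^ 2) ^ (3 * n + j)
      ≤ (2 / 3 * s ^ 3) ^ (2 * n) / (2 * n).factorial * (‖airyCoeff j‖ * (s ^ 2) ^ j) := by
  induction n with
  | zero => simp
  | succ n ih =>
    have hden : (9 / 4) * ((2 * n + 2) * (2 * n + 1) : ℝ)
        ≤ (((3 * n + j : ℕ) : ℝ) + 3) * (((3 * n + j : ℕ) : ℝ) + 2) := by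
      push_cast
      nlinarith [(n.cast_nonneg : (0 : ℝ) ≤ n), (j.cast_nonneg : (0 : ℝ) ≤ j)]
    calc ‖airyCoeff (3 * (n + 1) + j)‖ * (s ^ 2) ^ (3 * (n + 1) + j)
        = ‖airyCoeff (3 * n + j)‖ * (s ^ 2) ^ (3 * n + j) *
            ((s ^ 2) ^ 3 / ((((3 * n + j : ℕ) : ℝ) + 3) * (((3 * n + j : ℕ) : ℝ) + 2))) := by
          rw [show 3 * (n + 1) + j = 3 * n + j + 3 by ring, norm_airyCoeff_add_three]
          ring
      _ ≤ (2 / 3 * s ^ 3) ^ (2 * n) / (2 * n).factorial * (‖airyCoeff j‖ * (s ^ 2) ^ j) *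
            ((s ^ 2) ^ 3 / ((9 / 4) * ((2 * n + 2) * (2 * n + 1)))) := by
          rw [pow_mul (2 / 3 * s ^ 3)] at ih ⊢
          gcongr
      _ = (2 / 3 * s ^ 3) ^ (2 * (n + 1)) / (2 * (n + 1)).factorial *
            (‖airyCoeff j‖ * (s ^ 2) ^ j) := by
          rw [show 2 * (n + 1) = 2 * n + 1 + 1 by ring, Nat.factorial_succ, Nat.factorial_succ]
          push_cast
          field_simp
          ring

/-- The termwise majorant of the Airy series on the disk of radius `s ^ 2`: the residue of the index
modulo `3` selects the initial coefficient, the quotient selects the term of the `cosh` series. -/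
noncomputable def airyMajorant (s : ℝ) (k : ℕ) : ℝ :=
  (2 / 3 * s ^ 3) ^ (2 * (k / 3)) / (2 * (k / 3)).factorial *
    (‖airyCoeff (k % 3)‖ * (s ^ 2) ^ (k % 3))

theorem hasSum_airyMajorant (s : ℝ) :
    HasSum (airyMajorant s)
      (cosh (2 / 3 * s ^ 3) * (‖airyCoeff 0‖ + ‖airyCoeff 1‖ * s ^ 2)) := by
  have hcosh := hasSum_cosh (2 / 3 * s ^ 3)
  have hfin := hasSum_fintype fun j : Fin 3 ↦ ‖airyCoeff j‖ * (s ^ 2) ^ (j : ℕ)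
  have hprod := hcosh.mul hfin <| hcosh.summable.mul_of_nonneg hfin.summable
    (fun n ↦ by simp only [pow_mul, Pi.zero_apply]; positivity)
    (fun j ↦ by simp only [Pi.zero_apply]; positivity)
  have hsum : ∑ j : Fin 3, ‖airyCoeff j‖ * (s ^ 2) ^ (j : ℕ)
      = ‖airyCoeff 0‖ + ‖airyCoeff 1‖ * s ^ 2 := by
    simp [Fin.sum_univ_three, airyCoeff]
  rw [hsum] at hprod
  exact (Nat.divModEquiv 3).hasSum_iff.2 hprod

theorem norm_airyCoeff_mul_pow_le_airyMajorant {w : ℂ} {s : ℝ} (hw : ‖w‖ ≤ s ^ 2) (k : ℕ) :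
    ‖airyCoeff k * w ^ k‖ ≤ airyMajorant s k := by
  calc ‖airyCoeff k * w ^ k‖ = ‖airyCoeff k‖ * ‖w‖ ^ k := by rw [norm_mul, norm_pow]
    _ ≤ ‖airyCoeff k‖ * (s ^ 2) ^ k := by gcongr
    _ ≤ airyMajorant s k := by
      simpa only [airyMajorant, Nat.div_add_mod] using norm_airyCoeff_mul_pow_le s (k / 3) (k % 3)

theorem norm_Ai_le {w : ℂ} {s : ℝ} (hw : ‖w‖ ≤ s ^ 2) :
    ‖Ai w‖ ≤ cosh (2 / 3 * s ^ 3) * (‖airyCoeff 0‖ + ‖airyCoeff 1‖ * s ^ 2) :=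
  tsum_of_norm_bounded (hasSum_airyMajorant s) (norm_airyCoeff_mul_pow_le_airyMajorant hw)

/-- The Taylor polynomial of `Ai` at `0` formed by the terms of degree less than `N`; the Airy
equation for `Ai` is the limit of the identity for the second derivatives of these polynomials. -/
noncomputable def airyPoly (N : ℕ) : ℂ[X] := ∑ k ∈ Finset.range N, C (airyCoeff k) * X ^ k

theorem derivative_derivative_airyPoly (N : ℕ) :
    derivative (derivative (airyPoly (N + 3))) = X * airyPoly N := by
  induction N with
  | zero => simp [airyPoly, Finset.sum_range_succ, airyCoeff]
  | succ N ih =>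
    have hterm : airyCoeff (N + 3) * ((N : ℂ) + 3) * ((N : ℂ) + 2) = airyCoeff N := by
      have h3 : (N : ℂ) + 3 ≠ 0 := by exact_mod_cast (N + 2).succ_ne_zero
      have h2 : (N : ℂ) + 2 ≠ 0 := by exact_mod_cast (N + 1).succ_ne_zero
      rw [airyCoeff_add_three]
      field_simp
    have hsucc (M : ℕ) : airyPoly (M + 1) = airyPoly M + C (airyCoeff M) * X ^ M :=
      Finset.sum_range_succ _ _
    rw [show N + 1 + 3 = N + 3 + 1 by ring, hsucc (N + 3), hsucc N, derivative_add,
      derivative_add, ih, mul_add, derivative_C_mul_X_pow, derivative_C_mul_X_pow, ← hterm]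
    push_cast
    ring

theorem tendstoLocallyUniformlyOn_airyPoly :
    TendstoLocallyUniformlyOn (fun N z ↦ (airyPoly N).eval z) Ai atTop univ := by
  rw [tendstoLocallyUniformlyOn_iff_forall_isCompact isOpen_univ]
  intro K _ hK
  obtain ⟨R, hR, hKR⟩ := hK.isBounded.exists_pos_norm_le
  have hle (k : ℕ) (w : ℂ) (hw : w ∈ K) : ‖airyCoeff k * w ^ k‖ ≤ airyMajorant (√R) k :=
    norm_airyCoeff_mul_pow_le_airyMajorant ((hKR w hw).trans (sq_sqrt hR.le).ge) k
  unfold Ai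
  simpa [airyPoly, eval_finsetSum] using
    tendstoUniformlyOn_tsum_nat (hasSum_airyMajorant (√R)).summable hle

theorem isLinearODESolution_Ai : IsLinearODESolution (fun z ↦ z) Ai := by
  have hpoly (q : ℂ[X]) : DifferentiableOn ℂ (fun z ↦ q.eval z) univ :=
    q.differentiable.differentiableOn
  have hlim := tendstoLocallyUniformlyOn_airyPoly
  have hAi : Differentiable ℂ Ai := differentiableOn_univ.1 <|
    hlim.differentiableOn (.of_forall fun N ↦ hpoly (airyPoly N)) isOpen_univ
  have hderiv₂ (q : ℂ[X]) (z : ℂ) :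
      deriv (deriv fun z ↦ q.eval z) z = (derivative (derivative q)).eval z := by
    have hderiv : (deriv fun z ↦ q.eval z) = fun z ↦ (derivative q).eval z :=
      funext fun z ↦ q.deriv
    rw [hderiv, Polynomial.deriv]
  have hlim₂ := (hlim.deriv (.of_forall fun N ↦ hpoly (airyPoly N)) isOpen_univ).deriv
    (.of_forall fun N ↦ (hpoly (airyPoly N)).deriv isOpen_univ) isOpen_univ
  refine ⟨hAi, fun z ↦ ?_⟩
  have hz₂ : Tendsto (fun N ↦ z * (airyPoly N).eval z) atTop (𝓝 (deriv (deriv Ai) z)) := by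
    simpa [Function.comp_def, hderiv₂, derivative_derivative_airyPoly] using
      (tendsto_add_atTop_iff_nat 3).2 (hlim₂.tendsto_at (mem_univ z))
  rw [← tendsto_nhds_unique hz₂ ((hlim.tendsto_at (mem_univ z)).const_mul z)]
  exact (hAi.deriv z).hasDerivAt

theorem isLinearODESolution_Ai_comp_mul {c : ℂ} (hc : c ^ 3 = -1) :
    IsLinearODESolution (fun z ↦ -z) (fun z ↦ Ai (c * z)) := by
  convert isLinearODESolution_Ai.comp_mul_left c using 2 with z
  linear_combination -z * hc

end Airy

section Kernel

theorem ωc_pow_three : ωc ^ 3 = 1 := by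
  rw [ωc, ← Complex.exp_nat_mul, ← Complex.exp_two_pi_mul_I]
  congr 1
  push_cast
  ring

theorem norm_ωc : ‖ωc‖ = 1 := by
  rw [← pow_eq_one_iff_of_nonneg (norm_nonneg _) three_ne_zero, ← norm_pow, ωc_pow_three, norm_one]

/-- The product of the two solutions of `y'' = -z y` that, up to the factor `1 / W`, makes up the
Green's function of the Stark Hamiltonian. All of `α_±` and `β_±` are values of it. -/
noncomputable def airyKernel (u v : ℂ) : ℂ := Ai (-ωc * u) * Ai (-v)

theorem norm_airyKernel_le {u v : ℂ} {s : ℝ} (hs : 1 ≤ s) (hu : ‖u‖ ≤ s ^ 2) (hv : ‖v‖ ≤ s ^ 2) :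
    ‖airyKernel u v‖
      ≤ (‖airyCoeff 0‖ + ‖airyCoeff 1‖) ^ 2 * (s ^ 4 * exp (4 / 3 * s ^ 3)) := by
  have hcosh : cosh (2 / 3 * s ^ 3) ≤ exp (2 / 3 * s ^ 3) := by
    have hsinh : 0 ≤ sinh (2 / 3 * s ^ 3) := sinh_nonneg_iff.2 (by positivity)
    linarith [cosh_add_sinh (2 / 3 * s ^ 3)]
  have hAi {w : ℂ} (hw : ‖w‖ ≤ s ^ 2) :
      ‖Ai w‖ ≤ exp (2 / 3 * s ^ 3) * ((‖airyCoeff 0‖ + ‖airyCoeff 1‖) * s ^ 2) := by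
    refine (norm_Ai_le hw).trans ?_
    rw [add_mul]
    gcongr
    exact le_mul_of_one_le_right (norm_nonneg _) (one_le_pow₀ hs)
  have hωu : ‖-ωc * u‖ ≤ s ^ 2 := by rwa [norm_mul, norm_neg, norm_ωc, one_mul]
  calc ‖airyKernel u v‖ = ‖Ai (-ωc * u)‖ * ‖Ai (-v)‖ := norm_mul _ _
    _ ≤ (exp (2 / 3 * s ^ 3) * ((‖airyCoeff 0‖ + ‖airyCoeff 1‖) * s ^ 2)) *
          (exp (2 / 3 * s ^ 3) * ((‖airyCoeff 0‖ + ‖airyCoeff 1‖) * s ^ 2)) := by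
      gcongr
      exacts [hAi hωu, hAi (by rwa [norm_neg])]
    _ = (‖airyCoeff 0‖ + ‖airyCoeff 1‖) ^ 2 * (s ^ 4 * exp (4 / 3 * s ^ 3)) := by
      rw [show 4 / 3 * s ^ 3 = 2 / 3 * s ^ 3 + 2 / 3 * s ^ 3 by ring, exp_add]
      ring

theorem exists_norm_airyKernel_sub_swap_le :
    ∃ K : ℝ, 0 ≤ K ∧ ∀ {u v : ℂ} {s : ℝ}, 0 ≤ s → ‖u‖ ≤ s ^ 2 → ‖v‖ ≤ s ^ 2 →
      ‖airyKernel u v - airyKernel v u‖ ≤ K * ‖v - u‖ * exp (s * ‖v - u‖) := by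
  have h₁ : IsLinearODESolution (fun z ↦ -z) (fun z ↦ Ai (-ωc * z)) :=
    isLinearODESolution_Ai_comp_mul (by rw [neg_pow, ωc_pow_three]; norm_num)
  have h₂ : IsLinearODESolution (fun z ↦ -z) (fun z ↦ Ai (-z)) := by
    simpa only [neg_one_mul] using isLinearODESolution_Ai_comp_mul (c := -1) (by norm_num)
  refine ⟨_, norm_nonneg _, fun {u v s} hs hu hv ↦ h₁.norm_cross_sub_le h₂ hs fun w hw ↦ ?_⟩
  have hw' := (convex_closedBall (0 : ℂ) (s ^ 2)).segment_subset (mem_closedBall_zero_iff.2 hu)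
    (mem_closedBall_zero_iff.2 hv) hw
  rwa [norm_neg, ← mem_closedBall_zero_iff]

theorem exists_norm_airyKernel_mul_sub_swap_le :
    ∃ K : ℝ, 0 ≤ K ∧ ∀ {u v : ℂ} {s : ℝ}, 1 ≤ s → ‖u‖ ≤ s ^ 2 → ‖v‖ ≤ s ^ 2 →
      ‖airyKernel v u * (airyKernel u v - airyKernel v u)‖
        ≤ K * ‖v - u‖ * (s ^ 4 * exp (4 / 3 * s ^ 3 + s * ‖v - u‖)) := by
  obtain ⟨K, hK, hswap⟩ := exists_norm_airyKernel_sub_swap_le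
  refine ⟨(‖airyCoeff 0‖ + ‖airyCoeff 1‖) ^ 2 * K, by positivity, fun {u v s} hs hu hv ↦ ?_⟩
  rw [norm_mul, exp_add]
  refine (mul_le_mul (norm_airyKernel_le hs hv hu) (hswap (zero_le_one.trans hs) hu hv)
    (norm_nonneg _) (by positivity)).trans_eq ?_
  ring

end Kernel

section Determinant

theorem norm_Wf_cube {p : ℝ} (hp : 0 ≤ p) : ‖Wf (p ^ 3)‖ = p / (2 * π) := by
  have hroot : (p ^ 3) ^ ((1 : ℝ) / 3) = p := by
    rw [one_div]
    exact_mod_cast pow_rpow_inv_natCast hp three_ne_zero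
  have hphase : ‖Complex.exp (-(π : ℂ) * Complex.I / 6)‖ = 1 := by
    rw [show -(π : ℂ) * Complex.I / 6 = ((-π / 6 : ℝ) : ℂ) * Complex.I by push_cast; ring,
      Complex.norm_exp_ofReal_mul_I]
  rw [Wf, hroot, norm_div, norm_mul, hphase, mul_one, Complex.norm_of_nonneg hp]
  exact_mod_cast congrArg (p / ·) (Complex.norm_of_nonneg two_pi_pos.le)

theorem Df_cube_mul_sq (κ η : ℝ) {p : ℝ} (hp : 0 < p) (u : ℂ) :
    Df κ η (p ^ 3) (p ^ 2 * u) =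
      1 + (airyKernel (u - κ * p) (u - κ * p) + airyKernel (u + κ * p) (u + κ * p)) /
          (η * Wf (p ^ 3))
        + airyKernel (u + κ * p) (u - κ * p) *
          (airyKernel (u - κ * p) (u + κ * p) - airyKernel (u + κ * p) (u - κ * p)) /
          (η ^ 2 * Wf (p ^ 3) ^ 2) := by
  have hscale : (p ^ 3) ^ (-(2 : ℝ) / 3) = (p ^ 2)⁻¹ := by
    rw [← rpow_natCast, ← rpow_natCast, ← rpow_mul hp.le, ← rpow_neg hp.le]
    norm_num
  have hp' : (p : ℂ) ≠ 0 := by exact_mod_cast hp.ne'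
  have hsub : (p ^ 2 * u - κ * (p ^ 3 : ℝ)) * (((p ^ 2)⁻¹ : ℝ) : ℂ) = u - κ * p := by
    push_cast
    field_simp
  have hadd : (p ^ 2 * u + κ * (p ^ 3 : ℝ)) * (((p ^ 2)⁻¹ : ℝ) : ℂ) = u + κ * p := by
    push_cast
    field_simp
  simp only [Df, alphaP, alphaM, betaP, betaM, airyKernel, hscale, neg_mul, mul_assoc, hsub, hadd]

theorem norm_airyKernel_add_div_le (η : ℝ) {p s : ℝ} {u v : ℂ} (hp : 0 ≤ p) (hs : 1 ≤ s)
    (hu : ‖u‖ ≤ s ^ 2) (hv : ‖v‖ ≤ s ^ 2) :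
    ‖(airyKernel u u + airyKernel v v) / (η * Wf (p ^ 3))‖
      ≤ 4 * π * (‖airyCoeff 0‖ + ‖airyCoeff 1‖) ^ 2 / |η| * (s ^ 4 * exp (4 / 3 * s ^ 3) / p) := by
  rw [norm_div, norm_mul, norm_Wf_cube hp, Complex.norm_real, norm_eq_abs]
  calc ‖airyKernel u u + airyKernel v v‖ / (|η| * (p / (2 * π)))
      ≤ ((‖airyCoeff 0‖ + ‖airyCoeff 1‖) ^ 2 * (s ^ 4 * exp (4 / 3 * s ^ 3)) +
          (‖airyCoeff 0‖ + ‖airyCoeff 1‖) ^ 2 * (s ^ 4 * exp (4 / 3 * s ^ 3))) /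
          (|η| * (p / (2 * π))) := by
        gcongr
        exact norm_add_le_of_le (norm_airyKernel_le hs hu hu) (norm_airyKernel_le hs hv hv)
    _ = 4 * π * (‖airyCoeff 0‖ + ‖airyCoeff 1‖) ^ 2 / |η| *
          (s ^ 4 * exp (4 / 3 * s ^ 3) / p) := by
        field_simp
        ring

-- The kernel difference is of the order of `p`, which compensates one of the two factors `p` that
-- `W ^ 2` contributes to the denominator.
theorem exists_norm_airyKernel_mul_sub_div_le (η : ℝ) :
    ∃ K : ℝ, 0 ≤ K ∧ ∀ {d p s : ℝ} {u v : ℂ}, 0 ≤ d → 0 ≤ p → p ≤ 1 → 1 ≤ s → ‖u‖ ≤ s ^ 2 →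
      ‖v‖ ≤ s ^ 2 → ‖v - u‖ ≤ d * p →
        ‖airyKernel v u * (airyKernel u v - airyKernel v u) / (η ^ 2 * Wf (p ^ 3) ^ 2)‖
          ≤ K * d * (s ^ 4 * exp (4 / 3 * s ^ 3 + d * s) / p) := by
  obtain ⟨K, hK, hswap⟩ := exists_norm_airyKernel_mul_sub_swap_le
  refine ⟨4 * π ^ 2 * K / η ^ 2, by positivity, fun {d p s u v} hd hp hp1 hs hu hv hdist ↦ ?_⟩
  have hexponent : s * ‖v - u‖ ≤ d * s := by
    rw [mul_comm d s]
    gcongr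
    exact hdist.trans (mul_le_of_le_one_right hd hp1)
  rw [norm_div, norm_mul _ (_ ^ 2), norm_pow, norm_pow, norm_Wf_cube hp, Complex.norm_real,
    norm_eq_abs, sq_abs]
  calc ‖airyKernel v u * (airyKernel u v - airyKernel v u)‖ / (η ^ 2 * (p / (2 * π)) ^ 2)
      ≤ K * (d * p) * (s ^ 4 * exp (4 / 3 * s ^ 3 + d * s)) / (η ^ 2 * (p / (2 * π)) ^ 2) := by
        gcongr
        exact (hswap hs hu hv).trans (by gcongr)
    _ = 4 * π ^ 2 * K / η ^ 2 * d * (s ^ 4 * exp (4 / 3 * s ^ 3 + d * s) / p) := by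
        field_simp
        ring

theorem exists_norm_Df_le (κ η : ℝ) :
    ∃ C : ℝ, 0 ≤ C ∧ ∀ {p s : ℝ} {u : ℂ}, 0 < p → p ≤ 1 → 1 ≤ s → ‖u‖ + |κ| ≤ s ^ 2 →
      ‖Df κ η (p ^ 3) (p ^ 2 * u)‖
        ≤ C * (s ^ 4 * exp (4 / 3 * s ^ 3 + 2 * |κ| * s) / p) := by
  obtain ⟨K, hK, hoff⟩ := exists_norm_airyKernel_mul_sub_div_le η
  refine ⟨1 + 4 * π * (‖airyCoeff 0‖ + ‖airyCoeff 1‖) ^ 2 / |η| + K * (2 * |κ|), by positivity,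
    fun {p s u} hp hp1 hs hu ↦ ?_⟩
  have hκp : ‖(κ * p : ℂ)‖ = |κ| * p := by simp [abs_of_pos hp]
  have hκp_le : |κ| * p ≤ |κ| := mul_le_of_le_one_right (abs_nonneg κ) hp1
  have hsub : ‖u - κ * p‖ ≤ s ^ 2 := (norm_sub_le _ _).trans (by rw [hκp]; linarith)
  have hadd : ‖u + κ * p‖ ≤ s ^ 2 := (norm_add_le _ _).trans (by rw [hκp]; linarith)
  have hdist : ‖u + κ * p - (u - κ * p)‖ = 2 * |κ| * p := by
    rw [add_sub_sub_cancel, ← two_mul, norm_mul, hκp, Complex.norm_ofNat, mul_assoc]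
  have hone : ‖(1 : ℂ)‖ ≤ s ^ 4 * exp (4 / 3 * s ^ 3 + 2 * |κ| * s) / p := by
    rw [norm_one, one_le_div hp]
    exact hp1.trans (one_le_mul_of_one_le_of_one_le (one_le_pow₀ hs) (one_le_exp (by positivity)))
  have hexp : exp (4 / 3 * s ^ 3) ≤ exp (4 / 3 * s ^ 3 + 2 * |κ| * s) :=
    exp_le_exp.2 (le_add_of_nonneg_right (by positivity))
  rw [Df_cube_mul_sq κ η hp, add_mul, add_mul, one_mul]
  refine norm_add₃_le.trans (add_le_add (add_le_add hone ?_)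
    (hoff (by positivity) hp.le hp1 hs hsub hadd hdist.le))
  exact (norm_airyKernel_add_div_le η hp.le hs hsub hadd).trans (by gcongr)

end Determinant

section Absorption

theorem mul_sq_le_mul_cube_add {q ε t : ℝ} (hq : 0 ≤ q) (hε : 0 < ε) (ht : 0 ≤ t) :
    q * t ^ 2 ≤ ε * t ^ 3 + q ^ 3 / ε ^ 2 := by
  rcases le_total (ε * t) q with h | h
  · have : q * (ε * t) ^ 2 ≤ q * q ^ 2 := by gcongr
    have : q * t ^ 2 ≤ q ^ 3 / ε ^ 2 := by
      rw [le_div_iff₀ (by positivity)]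
      linarith
    have : 0 ≤ ε * t ^ 3 := by positivity
    linarith
  · have : q * t ^ 2 ≤ ε * t * t ^ 2 := by gcongr
    have : 0 ≤ q ^ 3 / ε ^ 2 := by positivity
    linarith

theorem exists_shifted_cubic_le {a c : ℝ} (hac : a < c) (b L : ℝ) :
    ∃ B : ℝ, ∀ t, 0 ≤ t → a * (t + b) ^ 3 + L * (t + b) ≤ c * t ^ 3 + B := by
  let q₂ : ℝ := 3 * a * b
  let q₁ : ℝ := 3 * a * b ^ 2 + L
  refine ⟨(|q₂| + |q₁|) ^ 3 / (c - a) ^ 2 + |q₁| + (a * b ^ 3 + L * b), fun t ht ↦ ?_⟩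
  have hcubic := mul_sq_le_mul_cube_add (by positivity : 0 ≤ |q₂| + |q₁|) (sub_pos.2 hac) ht
  have h₂ : q₂ * t ^ 2 ≤ |q₂| * t ^ 2 := by gcongr; exact le_abs_self q₂
  have h₁ : q₁ * t ≤ |q₁| * (t ^ 2 + 1) := by
    refine mul_le_mul (le_abs_self q₁) ?_ ht (abs_nonneg q₁)
    nlinarith [sq_nonneg (t - 1)]
  have hexpand : a * (t + b) ^ 3 + L * (t + b)
      = a * t ^ 3 + q₂ * t ^ 2 + q₁ * t + (a * b ^ 3 + L * b) := by ring
  linarith [hexpand]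

theorem exists_pow_mul_exp_shifted_cubic_le {a c b : ℝ} (hac : a < c) (hb : 0 ≤ b) (L : ℝ)
    (n : ℕ) :
    ∃ B : ℝ, ∀ t, 0 ≤ t → (t + b) ^ n * exp (a * (t + b) ^ 3 + L * (t + b))
      ≤ B * exp (c * t ^ 3) := by
  obtain ⟨B, hB⟩ := exists_shifted_cubic_le hac b (L + 1)
  refine ⟨n.factorial * exp B, fun t ht ↦ ?_⟩
  have hpow : (t + b) ^ n ≤ n.factorial * exp (t + b) := by
    rw [mul_comm, ← div_le_iff₀ (by positivity)]
    exact pow_div_factorial_le_exp _ (by positivity) n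
  calc (t + b) ^ n * exp (a * (t + b) ^ 3 + L * (t + b))
      ≤ n.factorial * exp (t + b) * exp (a * (t + b) ^ 3 + L * (t + b)) := by gcongr
    _ = n.factorial * exp (a * (t + b) ^ 3 + (L + 1) * (t + b)) := by
      rw [mul_assoc, ← exp_add]
      ring_nf
    _ ≤ n.factorial * exp (c * t ^ 3 + B) :=
      mul_le_mul_of_nonneg_left (exp_le_exp.2 (hB t ht)) (by positivity)
    _ = n.factorial * exp B * exp (c * t ^ 3) := by rw [exp_add]; ring

end Absorption

theorem exists_forall_norm_Df_cube_mul_sq_le (κ : ℝ) {η c : ℝ} (hη : η ≠ 0) (hc : 1 < c) :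
    ∃ p₀ > (0 : ℝ), ∀ p : ℝ, 0 < p → p < p₀ → ∀ t : ℝ, 0 < t → ∀ u : ℂ, ‖u‖ ≤ t ^ 2 →
      ‖Df κ η (p ^ 3) (p ^ 2 * u)‖
        ≤ 1 / (2 * (p * t) ^ 2 * η ^ 2) * exp (4 / 3 * c * t ^ 3) := by
  obtain ⟨C, hC, hDf⟩ := exists_norm_Df_le κ η
  set b : ℝ := |κ| + 1 with hb
  obtain ⟨B, hB⟩ := exists_pow_mul_exp_shifted_cubic_le (a := 4 / 3) (c := 4 / 3 * c) (b := b)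
    (by linarith) (by positivity) (2 * |κ|) 6
  refine ⟨(max 1 (2 * η ^ 2 * C * B))⁻¹, by positivity, fun p hp hp₀ t ht u hu ↦ ?_⟩
  have hmax : max 1 (2 * η ^ 2 * C * B) * p ≤ 1 :=
    (mul_le_mul_of_nonneg_left hp₀.le (by positivity)).trans_eq (mul_inv_cancel₀ (by positivity))
  have hp1 : p ≤ 1 := by
    simpa using (mul_le_mul_of_nonneg_right (le_max_left _ _) hp.le).trans hmax
  have hpB : 2 * η ^ 2 * C * B * p ≤ 1 :=
    (mul_le_mul_of_nonneg_right (le_max_right _ _) hp.le).trans hmax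
  have hs : 1 ≤ t + b := by linarith [hb, abs_nonneg κ]
  have hus : ‖u‖ + |κ| ≤ (t + b) ^ 2 := by nlinarith [hb, abs_nonneg κ]
  have hpt : t ^ 2 ≤ (t + b) ^ 2 := by gcongr; exact le_add_of_nonneg_right (by positivity)
  set e : ℝ := exp (4 / 3 * (t + b) ^ 3 + 2 * |κ| * (t + b))
  rw [div_mul_eq_mul_div, one_mul, le_div_iff₀ (by positivity)]
  calc ‖Df κ η (p ^ 3) (p ^ 2 * u)‖ * (2 * (p * t) ^ 2 * η ^ 2)
      ≤ C * ((t + b) ^ 4 * e / p) * (2 * (p * t) ^ 2 * η ^ 2) := by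
        gcongr
        exact hDf hp hp1 hs hus
    _ = 2 * η ^ 2 * C * p * ((t + b) ^ 4 * e * t ^ 2) := by field_simp
    _ ≤ 2 * η ^ 2 * C * p * ((t + b) ^ 4 * e * (t + b) ^ 2) := by gcongr
    _ = 2 * η ^ 2 * C * p * ((t + b) ^ 6 * e) := by ring
    _ ≤ 2 * η ^ 2 * C * p * (B * exp (4 / 3 * c * t ^ 3)) := by
        gcongr ?_ * ?_
        exact hB t ht.le
    _ = 2 * η ^ 2 * C * B * p * exp (4 / 3 * c * t ^ 3) := by ring
    _ ≤ exp (4 / 3 * c * t ^ 3) := mul_le_of_le_one_left (exp_pos _).le hpB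

theorem stmt16_general (κ : ℝ) {η c : ℝ} (hη : η ≠ 0) (hc : 1 < c) :
    ∃ f₀ > (0 : ℝ), ∀ f : ℝ, 0 < f → f < f₀ → ∀ r : ℝ, 0 < r → ∀ z : ℂ, ‖z‖ ≤ r →
      ‖Df κ η f z‖ ≤ 1 / (2 * r * η ^ 2) * exp (4 * c * r ^ ((3 : ℝ) / 2) / (3 * f)) := by
  obtain ⟨p₀, hp₀, h⟩ := exists_forall_norm_Df_cube_mul_sq_le κ hη hc
  refine ⟨p₀ ^ 3, by positivity, fun f hf hff r hr z hz ↦ ?_⟩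
  obtain ⟨p, hp, rfl⟩ : ∃ p : ℝ, 0 < p ∧ p ^ 3 = f :=
    ⟨f ^ ((3 : ℕ) : ℝ)⁻¹, by positivity, rpow_inv_natCast_pow hf.le three_ne_zero⟩
  obtain ⟨t, ht, rfl⟩ : ∃ t : ℝ, 0 < t ∧ (p * t) ^ 2 = r :=
    ⟨√r / p, by positivity, by rw [mul_div_cancel₀ _ hp.ne', sq_sqrt hr.le]⟩
  obtain ⟨u, rfl⟩ : ∃ u : ℂ, p ^ 2 * u = z := by
    have hp' : (p : ℂ) ^ 2 ≠ 0 := by exact_mod_cast (pow_pos hp 2).ne'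
    exact ⟨z / p ^ 2, mul_div_cancel₀ _ hp'⟩
  have hu : ‖u‖ ≤ t ^ 2 := by
    rw [norm_mul, norm_pow, Complex.norm_of_nonneg hp.le, mul_pow] at hz
    exact le_of_mul_le_mul_left hz (by positivity)
  have hexponent :
      4 * c * ((p * t) ^ 2) ^ ((3 : ℝ) / 2) / (3 * p ^ 3) = 4 / 3 * c * t ^ 3 := by
    have hcube : ((p * t) ^ 2) ^ ((3 : ℝ) / 2) = (p * t) ^ 3 := by
      rw [← rpow_natCast, ← rpow_natCast, ← rpow_mul (by positivity)]
      norm_num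
    rw [hcube]
    field_simp
  rw [hexponent]
  exact h p hp (lt_of_pow_lt_pow_left₀ 3 hp₀.le hff) t ht u hu

/-- Growth bound for `D_f`: for any `c > 1` and small `f`, on any disk of
radius `r > f^a` one has `|D_f(z)| ≤ (1/(2rη²))·exp(4c·r^{3/2}/(3f))`. -/
theorem stmt16 (κ η : ℝ) (hκ : 0 < κ) (hη : 0 < η) (c a : ℝ)
    (hc : 1 < c) (ha0 : 0 < a) (ha1 : a < 1 / 2) :
    ∃ f₀ > (0 : ℝ), ∀ f : ℝ, 0 < f → f < f₀ → ∀ r : ℝ, f ^ a < r →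
      ∀ z : ℂ, ‖z‖ < r →
        ‖Df κ η f z‖ ≤
          (1 / (2 * r * η ^ 2)) * Real.exp (4 * c * r ^ ((3 : ℝ) / 2) / (3 * f)) := by
  obtain ⟨f₀, hf₀, h⟩ := stmt16_general κ hη.ne' hc
  exact ⟨f₀, hf₀, fun f hf hff r _ z hz ↦
    h f hf hff r ((norm_nonneg z).trans_lt hz) z hz.le⟩
end

section
/- Fix real κ > 0, η > 0 and ε > 0. There exist complex constants c₁, c₂, c₃ depending only on η and κ, with c₁ ≠ 0, and constants C > 0 and f₀ > 0, such that for all f ∈ (0, f₀) and all z ∈ ℂ with |z| < f^{2/3 + ε}: |D_f(z) − f^{−1/3}·(c₁ + c₂·z·f^{−2/3} + c₃·f^{1/3})| ≤ C·f^{−1/3}·(|z|·f^{−2/3} + f^{1/3})². -/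
open Real

/-! In the variables `u = z f^{-2/3}`, `t = f^{1/3}` the functions `α_±`, `β_±` are products
`k(x, y) = Ai(-ωx) Ai(-y)` evaluated at `x, y ∈ {u - κt, u + κt}`, and `W = t w` with `w` the
Wronskian of `Ai(-ωx)` and `Ai(-x)`. The dangerous term is `β₊(β₋ - β₊) / (η²W²)`, where one
divides by `t²`. The bracket is antisymmetric, hence `O(t)`, and because `Ai''(0) = 0` it equals
`2κwt` up to `O(|t|(|u| + |t|)²)`: one power of `t` cancels and the relative error is already
quadratic. First-order Taylor expansion of the remaining factors gives the constants, with
`c₁ = 2(η + κ) Ai(0)² / (η²w)`. The value of `w` comes from the reflection formula for `Γ`. -/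

namespace StarkAiry

open Filter Asymptotics Metric

section Entire

variable {α : Type*} {l : Filter α}

lemma isBigO_one_comp_of_continuous {E F : Type*} [SeminormedAddCommGroup E] [ProperSpace E]
    [SeminormedAddCommGroup F] {h : E → F} {x : α → E} (hh : Continuous h)
    (hx : x =O[l] fun _ => (1 : ℝ)) : (fun i => h (x i)) =O[l] fun _ => (1 : ℝ) := by
  obtain ⟨c, hc⟩ := hx.bound
  have hball : Tendsto x l (𝓟 (closedBall 0 c)) :=
    tendsto_principal.2 (hc.mono fun i hi => by simpa using hi)
  exact (hh.continuousOn.isBigO_principal (isCompact_closedBall 0 c)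
    (by simp : ‖(1 : ℝ)‖ ≠ 0)).comp_tendsto hball

variable {F : Type*} [NormedAddCommGroup F] [NormedSpace ℂ F] [CompleteSpace F]
  {x y : α → ℂ} {s : α → ℝ}

lemma differentiable_dslope {f : ℂ → F} (hf : Differentiable ℂ f) (c : ℂ) :
    Differentiable ℂ (dslope f c) :=
  differentiableOn_univ.1 ((Complex.differentiableOn_dslope univ_mem).2 hf.differentiableOn)

lemma isBigO_sub_taylor_one {f : ℂ → F} (hf : Differentiable ℂ f)
    (hx : x =O[l] fun _ => (1 : ℝ)) :
    (fun i => f (x i) - f 0 - x i • deriv f 0) =O[l] fun i => x i ^ 2 := by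
  have hfactor (z : ℂ) : z ^ 2 • dslope (dslope f 0) 0 z = f z - f 0 - z • deriv f 0 := by
    have h₁ := sub_smul_dslope f 0 z
    have h₂ := sub_smul_dslope (dslope f 0) 0 z
    rw [sub_zero] at h₁ h₂
    rw [sq, mul_smul, h₂, dslope_same, smul_sub, h₁]
  have hbdd := isBigO_one_comp_of_continuous
    (differentiable_dslope (differentiable_dslope hf 0) 0).continuous hx
  refine ((isBigO_refl (fun i => x i ^ 2) l).norm_right.smul hbdd).congr_left
    (fun i => hfactor (x i)) |>.trans ?_
  simpa only [smul_eq_mul, mul_one] using (isBigO_refl (fun i => x i ^ 2) l).norm_left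

/-- Because `f''` vanishes at `0`, the remainder `f z - z f'(0)` has a quadratically small
derivative; the mean value inequality turns this into a Lipschitz estimate. -/
lemma isBigO_sub_sub_smul_deriv {f : ℂ → F} (hf : Differentiable ℂ f)
    (hf₂ : deriv (deriv f) 0 = 0) (hs : s =O[l] fun _ => (1 : ℝ)) (hx : x =O[l] s)
    (hy : y =O[l] s) :
    (fun i => f (x i) - f (y i) - (x i - y i) • deriv f 0) =O[l]
      fun i => s i ^ 2 * ‖x i - y i‖ := by
  obtain ⟨c, hc⟩ := ((hx.prod_left hy).trans hs).bound
  have hderiv : (fun z => deriv f z - deriv f 0) =O[𝓟 (closedBall (0 : ℂ) c)] fun z => z ^ 2 := by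
    have hid : (fun z : ℂ => z) =O[𝓟 (closedBall 0 c)] fun _ => (1 : ℝ) :=
      continuousOn_id.isBigO_principal (isCompact_closedBall 0 c) (by simp)
    simpa [hf₂] using isBigO_sub_taylor_one (hf.contDiff.differentiable_deriv_two) hid
  obtain ⟨K, hK, hbound⟩ := hderiv.exists_nonneg
  rw [isBigOWith_principal] at hbound
  have hlip : (fun i => f (x i) - f (y i) - (x i - y i) • deriv f 0) =O[l]
      fun i => ‖(x i, y i)‖ ^ 2 * ‖x i - y i‖ := by
    refine IsBigO.of_bound K (hc.mono fun i hi => ?_)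
    set r := ‖(x i, y i)‖
    have hr : closedBall (0 : ℂ) r ⊆ closedBall 0 c :=
      closedBall_subset_closedBall (by simpa using hi)
    have hmean := (convex_closedBall (0 : ℂ) r).norm_image_sub_le_of_norm_hasDerivWithin_le
      (f := fun z => f z - z • deriv f 0) (f' := fun z => deriv f z - (1 : ℂ) • deriv f 0)
      (C := K * r ^ 2) (x := y i) (y := x i)
      (fun z _ => ((hf z).hasDerivAt.sub ((hasDerivAt_id z).smul_const _)).hasDerivWithinAt)
      (fun z hz => ?_) (by simp [r]) (by simp [r])
    · calc _ = ‖f (x i) - x i • deriv f 0 - (f (y i) - y i • deriv f 0)‖ := by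
            rw [sub_smul]; congr 1; abel
        _ ≤ K * r ^ 2 * ‖x i - y i‖ := hmean
        _ = _ := by simp [r, mul_assoc]
    · rw [one_smul]
      refine (hbound z (hr hz)).trans ?_
      rw [norm_pow]
      gcongr
      simpa using hz
  exact hlip.trans (((hx.prod_left hy).norm_left.pow 2).mul (isBigO_refl _ _))

variable {f g : ℂ → ℂ}

lemma isBigO_mul_sub_taylor_one (hf : Differentiable ℂ f) (hg : Differentiable ℂ g)
    (hs : s =O[l] fun _ => (1 : ℝ)) (hx : x =O[l] s) (hy : y =O[l] s) :
    (fun i => f (x i) * g (y i) -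
      (f 0 * g 0 + deriv f 0 * g 0 * x i + f 0 * deriv g 0 * y i)) =O[l] fun i => s i ^ 2 := by
  have hf₁ := (isBigO_sub_taylor_one hf (hx.trans hs)).trans (hx.pow 2)
  have hg₁ := (isBigO_sub_taylor_one hg (hy.trans hs)).trans (hy.pow 2)
  have hg₀ := isBigO_one_comp_of_continuous hg.continuous (hy.trans hs)
  have hlin := isBigO_one_comp_of_continuous
    (h := fun z => f 0 + z * deriv f 0) (by fun_prop) (hx.trans hs)
  have hcross : (fun i => deriv f 0 * deriv g 0 * (x i * y i)) =O[l] fun i => s i ^ 2 :=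
    ((hx.mul hy).const_mul_left _).congr_right fun i => (sq _).symm
  refine ((((hf₁.mul hg₀).add (hg₁.mul hlin)).congr_right fun i => mul_one _).add
    hcross).congr_left fun i => ?_
  simp only [smul_eq_mul]
  ring

lemma isBigO_wronskian (hf : Differentiable ℂ f) (hg : Differentiable ℂ g)
    (hf₂ : deriv (deriv f) 0 = 0) (hg₂ : deriv (deriv g) 0 = 0)
    (hs : s =O[l] fun _ => (1 : ℝ)) (hx : x =O[l] s) (hy : y =O[l] s) :
    (fun i => f (x i) * g (y i) - f (y i) * g (x i) -
      (f 0 * deriv g 0 - deriv f 0 * g 0) * (y i - x i)) =O[l]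
      fun i => s i ^ 2 * ‖x i - y i‖ := by
  have hy₁ := hy.trans hs
  have hfg := (isBigO_sub_sub_smul_deriv hf hf₂ hs hx hy).mul
    (isBigO_one_comp_of_continuous hg.continuous hy₁)
  have hgf := (isBigO_sub_sub_smul_deriv hg hg₂ hs hx hy).mul
    (isBigO_one_comp_of_continuous hf.continuous hy₁)
  have hbase : (fun i => deriv f 0 * (g (y i) - g 0 - y i • deriv g 0) -
      deriv g 0 * (f (y i) - f 0 - y i • deriv f 0)) =O[l] fun i => s i ^ 2 :=
    (((isBigO_sub_taylor_one hg hy₁).const_mul_left _).sub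
      ((isBigO_sub_taylor_one hf hy₁).const_mul_left _)).trans (hy.pow 2)
  have hbase' := hbase.mul (isBigO_refl (fun i => x i - y i) l).norm_right
  refine (((hfg.sub hgf).congr_right fun i => mul_one _).add hbase').congr_left fun i => ?_
  simp only [smul_eq_mul]
  ring

end Entire

section Airy

lemma airyCoeff_two : airyCoeff 2 = 0 := by rw [airyCoeff]

lemma airyCoeff_add_three (k : ℕ) :
    airyCoeff (k + 3) = airyCoeff k / (((k : ℂ) + 3) * ((k : ℂ) + 2)) := by rw [airyCoeff]

/-- The recursion divides by `(k + 3)(k + 2)`, which exceeds `r ^ 3` from some `k` on; from there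
the sequence `‖aₖ‖ rᵏ` decreases in steps of three. -/
lemma exists_norm_airyCoeff_mul_pow_le {r : ℝ} (hr : 0 ≤ r) :
    ∃ C, ∀ k, ‖airyCoeff k‖ * r ^ k ≤ C := by
  obtain ⟨N, hN⟩ := exists_nat_ge (r ^ 3)
  refine ⟨∑ k ∈ Finset.range (N + 3), ‖airyCoeff k‖ * r ^ k, fun k => ?_⟩
  induction k using Nat.strong_induction_on with
  | _ k ih =>
    obtain hk | hk := lt_or_ge k (N + 3)
    · exact Finset.single_le_sum (f := fun k => ‖airyCoeff k‖ * r ^ k)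
        (fun _ _ => by positivity) (Finset.mem_range.2 hk)
    obtain ⟨m, rfl⟩ := Nat.exists_eq_add_of_le' (show 3 ≤ k by omega)
    have hden : r ^ 3 ≤ ‖((m : ℂ) + 3) * ((m : ℂ) + 2)‖ := by
      have hm : (N : ℝ) ≤ m := by exact_mod_cast (show N ≤ m by omega)
      have hcast : ((m : ℂ) + 3) * ((m : ℂ) + 2) = (((m + 3) * (m + 2) : ℝ) : ℂ) := by
        push_cast; rfl
      rw [hcast, Complex.norm_of_nonneg (by positivity)]
      nlinarith
    calc ‖airyCoeff (m + 3)‖ * r ^ (m + 3)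
        = ‖airyCoeff m‖ * r ^ m * (r ^ 3 / ‖((m : ℂ) + 3) * ((m : ℂ) + 2)‖) := by
          rw [airyCoeff_add_three, norm_div]; ring
      _ ≤ ‖airyCoeff m‖ * r ^ m :=
          mul_le_of_le_one_right (by positivity) (div_le_one_of_le₀ hden (norm_nonneg _))
      _ ≤ _ := ih m (by omega)

lemma hasFPowerSeriesOnBall_Ai :
    HasFPowerSeriesOnBall Ai (FormalMultilinearSeries.ofScalars ℂ airyCoeff) 0 ⊤ := by
  have hradius : (FormalMultilinearSeries.ofScalars ℂ airyCoeff).radius = ⊤ := by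
    refine ENNReal.eq_top_of_forall_nnreal_le fun r => ?_
    obtain ⟨C, hC⟩ := exists_norm_airyCoeff_mul_pow_le r.coe_nonneg
    exact FormalMultilinearSeries.le_radius_of_bound _ C fun k => by
      simpa only [FormalMultilinearSeries.ofScalars_norm] using hC k
  have hsum : (FormalMultilinearSeries.ofScalars ℂ airyCoeff).sum = Ai := by
    funext z
    simp only [FormalMultilinearSeries.sum, FormalMultilinearSeries.ofScalars_apply_eq,
      smul_eq_mul, Ai]
  simpa only [hradius, hsum] using
    (FormalMultilinearSeries.ofScalars ℂ airyCoeff).hasFPowerSeriesOnBall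
      (by simp [hradius])

lemma differentiable_Ai : Differentiable ℂ Ai := by
  simpa only [eball_top, differentiableOn_univ] using
    hasFPowerSeriesOnBall_Ai.differentiableOn

lemma Ai_zero : Ai 0 = airyCoeff 0 := by
  simpa using (hasFPowerSeriesOnBall_Ai.coeff_zero 0).symm

lemma deriv_Ai_zero : deriv Ai 0 = airyCoeff 1 := by
  simpa using hasFPowerSeriesOnBall_Ai.hasFPowerSeriesAt.deriv

lemma deriv_deriv_Ai_zero : deriv (deriv Ai) 0 = 0 := by
  have h := hasFPowerSeriesOnBall_Ai.factorial_smul (y := (1 : ℂ)) 2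
  rw [← iteratedDeriv_eq_iteratedFDeriv, iteratedDeriv_succ, iteratedDeriv_one] at h
  simpa [airyCoeff_two] using h.symm

lemma Ai_zero_mul_deriv_Ai_zero : Ai 0 * deriv Ai 0 = ((-1 / (2 * π * √3) : ℝ) : ℂ) := by
  have hpow : (3 : ℂ) ^ (-(2 : ℂ) / 3) * (3 : ℂ) ^ (-(1 : ℂ) / 3) = 3⁻¹ := by
    rw [← Complex.cpow_add _ _ (by norm_num), ← Complex.cpow_neg_one]
    norm_num
  have hgamma : Complex.Gamma (1 / 3) * Complex.Gamma (2 / 3) = ((2 * π / √3 : ℝ) : ℂ) := by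
    have h := Complex.Gamma_mul_Gamma_one_sub (1 / 3)
    rw [show (1 : ℂ) - 1 / 3 = 2 / 3 by norm_num,
      show (π : ℂ) * (1 / 3) = ((π / 3 : ℝ) : ℂ) by push_cast; ring, ← Complex.ofReal_sin,
      Real.sin_pi_div_three] at h
    rw [h, ← Complex.ofReal_div]
    congr 1
    field_simp
  rw [Ai_zero, deriv_Ai_zero, airyCoeff, airyCoeff, mul_neg, div_mul_div_comm, hpow,
    mul_comm (Complex.Gamma _), hgamma]
  have hsqrt : (√3 : ℝ) ^ 2 = 3 := Real.sq_sqrt (by norm_num)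
  have hreal : -(3⁻¹ / (2 * π / √3)) = -1 / (2 * π * √3) := by
    field_simp
    linarith
  rw [← hreal]
  push_cast
  rfl

lemma ωc_sub_one : ωc - 1 = -(√3 : ℝ) * Complex.exp (-(π : ℂ) * Complex.I / 6) := by
  have hω : ωc = Complex.exp ((π - π / 3 : ℝ) * Complex.I) := by
    rw [ωc]
    congr 1
    push_cast
    ring
  have hexp : Complex.exp (-(π : ℂ) * Complex.I / 6) =
      Complex.exp ((-(π / 6) : ℝ) * Complex.I) := by
    congr 1
    push_cast
    ring
  have hsqrt : √3 * √3 = 3 := Real.mul_self_sqrt (by norm_num)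
  rw [hω, hexp]
  apply Complex.ext
  · rw [Complex.sub_re, Complex.one_re, neg_mul, Complex.neg_re, Complex.re_ofReal_mul,
      Complex.exp_ofReal_mul_I_re, Complex.exp_ofReal_mul_I_re, Real.cos_pi_sub, Real.cos_neg,
      Real.cos_pi_div_three, Real.cos_pi_div_six]
    linarith
  · rw [Complex.sub_im, Complex.one_im, neg_mul, Complex.neg_im, Complex.im_ofReal_mul,
      Complex.exp_ofReal_mul_I_im, Complex.exp_ofReal_mul_I_im, Real.sin_pi_sub, Real.sin_neg,
      Real.sin_pi_div_three, Real.sin_pi_div_six]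
    ring

/-- The Wronskian of `Ai(-ωx)` and `Ai(-x)`, so that `W = f^{1/3} · airyWronskian`. -/
noncomputable def airyWronskian : ℂ := Complex.exp (-(π : ℂ) * Complex.I / 6) / (2 * π)

lemma airyWronskian_eq : airyWronskian = (ωc - 1) * (Ai 0 * deriv Ai 0) := by
  have hsqrt : ((√3 : ℝ) : ℂ) ≠ 0 := by simp
  rw [Ai_zero_mul_deriv_Ai_zero, ωc_sub_one, airyWronskian]
  push_cast
  field_simp

lemma airyWronskian_ne_zero : airyWronskian ≠ 0 :=
  div_ne_zero (Complex.exp_ne_zero _) (by simp [Real.pi_ne_zero])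

lemma Ai_zero_ne_zero : Ai 0 ≠ 0 := fun h =>
  airyWronskian_ne_zero (by rw [airyWronskian_eq, h, zero_mul, mul_zero])

lemma Wf_eq (f : ℝ) : Wf f = ((f ^ ((1 : ℝ) / 3) : ℝ) : ℂ) * airyWronskian := by
  rw [Wf, airyWronskian, mul_div_assoc]

end Airy

section Determinant

/-- The kernel `Ai(-ωx)Ai(-y)`; the functions `α_±`, `β_±` are its values at
`x, y ∈ {(z - κf)f^{-2/3}, (z + κf)f^{-2/3}}`. -/
noncomputable def airyKernel (x y : ℂ) : ℂ := Ai (-ωc * x) * Ai (-1 * y)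

/-- The rescaled determinant `f^{2/3} D_f(z)` as a function of `u = z f^{-2/3}` and
`t = f^{1/3}`. -/
noncomputable def scaledDet (κ η u t : ℂ) : ℂ :=
  t ^ 2 + t * (airyKernel (u - κ * t) (u - κ * t) + airyKernel (u + κ * t) (u + κ * t)) /
      (η * airyWronskian) +
    airyKernel (u + κ * t) (u - κ * t) *
      (airyKernel (u - κ * t) (u + κ * t) - airyKernel (u + κ * t) (u - κ * t)) /
      (η ^ 2 * airyWronskian ^ 2)

/-- The constant `c₁` of the expansion of `D_f`. -/
noncomputable def expansionCoeff₁ (κ η : ℂ) : ℂ :=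
  2 * (η + κ) * Ai 0 ^ 2 / (η ^ 2 * airyWronskian)

/-- The constant `c₂` of the expansion of `D_f`, multiplying `z f^{-2/3}`. -/
noncomputable def expansionCoeff₂ (κ η : ℂ) : ℂ :=
  -2 * (η + κ) * (1 + ωc) * (Ai 0 * deriv Ai 0) / (η ^ 2 * airyWronskian)

/-- The constant `c₃` of the expansion of `D_f`, multiplying `f^{1/3}`. -/
noncomputable def expansionCoeff₃ (κ η : ℂ) : ℂ := 1 - 2 * κ ^ 2 / η ^ 2

lemma expansionCoeff₁_ne_zero {κ η : ℂ} (hη : η ≠ 0) (hηκ : η + κ ≠ 0) : expansionCoeff₁ κ η ≠ 0 :=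
  div_ne_zero (mul_ne_zero (mul_ne_zero two_ne_zero hηκ) (pow_ne_zero 2 Ai_zero_ne_zero))
    (mul_ne_zero (pow_ne_zero 2 hη) airyWronskian_ne_zero)

lemma differentiable_Ai_mul (c : ℂ) : Differentiable ℂ fun z => Ai (c * z) :=
  differentiable_Ai.comp (differentiable_id.const_mul c)

lemma deriv_Ai_mul (c : ℂ) : (deriv fun z => Ai (c * z)) = fun z => c * deriv Ai (c * z) := by
  funext z
  rw [deriv_comp_mul_left, smul_eq_mul]

lemma deriv_deriv_Ai_mul_zero (c : ℂ) : deriv (deriv fun z => Ai (c * z)) 0 = 0 := by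
  rw [deriv_Ai_mul, deriv_const_mul_field, deriv_comp_mul_left, mul_zero, deriv_deriv_Ai_zero,
    smul_zero, mul_zero]

variable {α : Type*} {l : Filter α} {x y : α → ℂ} {s : α → ℝ}

lemma isBigO_airyKernel_one (hx : x =O[l] fun _ => (1 : ℝ)) (hy : y =O[l] fun _ => (1 : ℝ)) :
    (fun i => airyKernel (x i) (y i)) =O[l] fun _ => (1 : ℝ) :=
  ((isBigO_one_comp_of_continuous (differentiable_Ai_mul (-ωc)).continuous hx).mul
    (isBigO_one_comp_of_continuous (differentiable_Ai_mul (-1)).continuous hy)).congr_right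
    fun _ => one_mul _

lemma isBigO_airyKernel (hs : s =O[l] fun _ => (1 : ℝ)) (hx : x =O[l] s) (hy : y =O[l] s) :
    (fun i => airyKernel (x i) (y i) - (Ai 0 ^ 2 - Ai 0 * deriv Ai 0 * (ωc * x i + y i)))
      =O[l] fun i => s i ^ 2 := by
  refine (isBigO_mul_sub_taylor_one (differentiable_Ai_mul (-ωc)) (differentiable_Ai_mul (-1))
    hs hx hy).congr_left fun i => ?_
  simp only [airyKernel, deriv_Ai_mul, mul_zero]
  ring

lemma isBigO_airyKernel_sub_swap (hs : s =O[l] fun _ => (1 : ℝ)) (hx : x =O[l] s)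
    (hy : y =O[l] s) :
    (fun i => airyKernel (x i) (y i) - airyKernel (y i) (x i) - airyWronskian * (y i - x i))
      =O[l] fun i => s i ^ 2 * ‖x i - y i‖ := by
  refine (isBigO_wronskian (differentiable_Ai_mul (-ωc)) (differentiable_Ai_mul (-1))
    (deriv_deriv_Ai_mul_zero _) (deriv_deriv_Ai_mul_zero _) hs hx hy).congr_left fun i => ?_
  simp only [airyKernel, deriv_Ai_mul, mul_zero, airyWronskian_eq]
  ring

variable {u t : α → ℂ}

lemma isBigO_airyKernel_diag_add_diag (κ : ℂ) (hs : s =O[l] fun _ => (1 : ℝ)) (hu : u =O[l] s)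
    (ht : t =O[l] s) :
    (fun i => airyKernel (u i - κ * t i) (u i - κ * t i) +
        airyKernel (u i + κ * t i) (u i + κ * t i) -
      (2 * Ai 0 ^ 2 - 2 * (Ai 0 * deriv Ai 0) * (1 + ωc) * u i)) =O[l] fun i => s i ^ 2 := by
  have hm := hu.sub (ht.const_mul_left κ)
  have hp := hu.add (ht.const_mul_left κ)
  refine ((isBigO_airyKernel hs hm hm).add (isBigO_airyKernel hs hp hp)).congr_left fun i => ?_
  ring

lemma isBigO_airyKernel_add_sub (κ : ℂ) (hs : s =O[l] fun _ => (1 : ℝ)) (hu : u =O[l] s)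
    (ht : t =O[l] s) :
    (fun i => airyKernel (u i + κ * t i) (u i - κ * t i) -
      (Ai 0 ^ 2 - Ai 0 * deriv Ai 0 * (1 + ωc) * u i - airyWronskian * κ * t i))
      =O[l] fun i => s i ^ 2 := by
  refine (isBigO_airyKernel hs (hu.add (ht.const_mul_left κ))
    (hu.sub (ht.const_mul_left κ))).congr_left fun i => ?_
  rw [airyWronskian_eq]
  ring

lemma isBigO_airyKernel_sub_add_sub_swap (κ : ℂ) (hs : s =O[l] fun _ => (1 : ℝ))
    (hu : u =O[l] s) (ht : t =O[l] s) :
    (fun i => airyKernel (u i - κ * t i) (u i + κ * t i) -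
        airyKernel (u i + κ * t i) (u i - κ * t i) - 2 * airyWronskian * κ * t i)
      =O[l] fun i => ‖t i‖ * s i ^ 2 := by
  have hgap : (fun i => ‖u i - κ * t i - (u i + κ * t i)‖) =O[l] fun i => ‖t i‖ :=
    (((isBigO_refl t l).norm_right.const_mul_left (-2 * κ)).congr_left fun i => by
      ring).norm_left
  refine ((isBigO_airyKernel_sub_swap hs (hu.sub (ht.const_mul_left κ))
    (hu.add (ht.const_mul_left κ))).trans
    (((isBigO_refl _ l).mul hgap).congr_right fun i => mul_comm _ _)).congr_left fun i => ?_
  ring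

lemma isBigO_scaledDet (κ : ℂ) {η : ℂ} (hη : η ≠ 0) (hs : s =O[l] fun _ => (1 : ℝ))
    (hu : u =O[l] s) (ht : t =O[l] s) :
    (fun i => scaledDet κ η (u i) (t i) -
      t i * (expansionCoeff₁ κ η + expansionCoeff₂ κ η * u i + expansionCoeff₃ κ η * t i))
      =O[l] fun i => ‖t i‖ * s i ^ 2 := by
  have htn : t =O[l] fun i => ‖t i‖ := (isBigO_refl t l).norm_right
  have hbdd : (fun i => airyKernel (u i + κ * t i) (u i - κ * t i)) =O[l] fun _ => (1 : ℝ) :=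
    isBigO_airyKernel_one ((hu.add (ht.const_mul_left κ)).trans hs)
      ((hu.sub (ht.const_mul_left κ)).trans hs)
  have halpha : (fun i => t i * (airyKernel (u i - κ * t i) (u i - κ * t i) +
      airyKernel (u i + κ * t i) (u i + κ * t i) -
      (2 * Ai 0 ^ 2 - 2 * (Ai 0 * deriv Ai 0) * (1 + ωc) * u i))) =O[l]
      fun i => ‖t i‖ * s i ^ 2 :=
    htn.mul (isBigO_airyKernel_diag_add_diag κ hs hu ht)
  have hdiff : (fun i => airyKernel (u i + κ * t i) (u i - κ * t i) *
      (airyKernel (u i - κ * t i) (u i + κ * t i) -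
        airyKernel (u i + κ * t i) (u i - κ * t i) - 2 * airyWronskian * κ * t i)) =O[l]
      fun i => ‖t i‖ * s i ^ 2 :=
    (hbdd.mul (isBigO_airyKernel_sub_add_sub_swap κ hs hu ht)).congr_right fun _ => one_mul _
  have hlead : (fun i => 2 * airyWronskian * κ * t i *
      (airyKernel (u i + κ * t i) (u i - κ * t i) -
        (Ai 0 ^ 2 - Ai 0 * deriv Ai 0 * (1 + ωc) * u i - airyWronskian * κ * t i))) =O[l]
      fun i => ‖t i‖ * s i ^ 2 :=
    (htn.const_mul_left _).mul (isBigO_airyKernel_add_sub κ hs hu ht)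
  refine ((halpha.const_mul_left (η * airyWronskian)⁻¹).add
    ((hdiff.add hlead).const_mul_left (η ^ 2 * airyWronskian ^ 2)⁻¹)).congr_left fun i => ?_
  have hw := airyWronskian_ne_zero
  simp only [scaledDet, expansionCoeff₁, expansionCoeff₂, expansionCoeff₃]
  field_simp
  ring

lemma exists_norm_scaledDet_sub_le (κ : ℂ) {η : ℂ} (hη : η ≠ 0) (R T : ℝ) :
    ∃ C > (0 : ℝ), ∀ u t : ℂ, ‖u‖ ≤ R → ‖t‖ ≤ T →
      ‖scaledDet κ η u t -
          t * (expansionCoeff₁ κ η + expansionCoeff₂ κ η * u + expansionCoeff₃ κ η * t)‖ ≤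
        C * (‖t‖ * (‖u‖ + ‖t‖) ^ 2) := by
  let S : Set (ℂ × ℂ) := {p | ‖p.1‖ ≤ R ∧ ‖p.2‖ ≤ T}
  have hs : (fun p : ℂ × ℂ => ‖p.1‖ + ‖p.2‖) =O[𝓟 S] fun _ => (1 : ℝ) :=
    isBigO_principal.2 ⟨R + T, fun p hp => by
      rw [Real.norm_of_nonneg (by positivity), norm_one, mul_one]
      exact add_le_add hp.1 hp.2⟩
  obtain ⟨C, hC, hbound⟩ := (isBigO_scaledDet κ hη hs (u := Prod.fst) (t := Prod.snd)
    (IsBigO.of_norm_le fun p => by simp) (IsBigO.of_norm_le fun p => by simp)).exists_pos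
  refine ⟨C, hC, fun u t hu ht => ?_⟩
  have h := isBigOWith_principal.1 hbound (u, t) ⟨hu, ht⟩
  rwa [Real.norm_of_nonneg (by positivity)] at h

lemma Df_eq_scaledDet_div (κ η : ℝ) {f : ℝ} (hf : 0 < f) (z : ℂ) :
    Df κ η f z =
      scaledDet κ η (z * ((f ^ (-(2 : ℝ) / 3) : ℝ) : ℂ)) ((f ^ ((1 : ℝ) / 3) : ℝ) : ℂ) /
        ((f ^ ((1 : ℝ) / 3) : ℝ) : ℂ) ^ 2 := by
  have hshift : (f : ℂ) * ((f ^ (-(2 : ℝ) / 3) : ℝ) : ℂ) = ((f ^ ((1 : ℝ) / 3) : ℝ) : ℂ) := by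
    rw [← Complex.ofReal_mul, ← Real.rpow_one_add' hf.le (by norm_num)]
    norm_num
  have ht : ((f ^ ((1 : ℝ) / 3) : ℝ) : ℂ) ≠ 0 := by
    exact_mod_cast (Real.rpow_pos_of_pos hf _).ne'
  have hw := airyWronskian_ne_zero
  rw [Df, Wf_eq, alphaP, alphaM, betaP, betaM]
  generalize ((f ^ (-(2 : ℝ) / 3) : ℝ) : ℂ) = r at *
  generalize ((f ^ ((1 : ℝ) / 3) : ℝ) : ℂ) = t at *
  have hm : (z - κ * f) * r = z * r - κ * t := by rw [← hshift]; ring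
  have hp : (z + κ * f) * r = z * r + κ * t := by rw [← hshift]; ring
  simp only [mul_assoc, neg_mul, hm, hp, scaledDet, airyKernel, one_mul]
  field_simp

end Determinant

lemma exists_norm_Df_sub_le (κ : ℝ) {η : ℝ} (hη : η ≠ 0) (f₀ R : ℝ) :
    ∃ C > (0 : ℝ), ∀ f : ℝ, 0 < f → f < f₀ → ∀ z : ℂ, ‖z‖ ≤ R * f ^ ((2 : ℝ) / 3) →
      ‖Df κ η f z - ((f ^ (-(1 : ℝ) / 3) : ℝ) : ℂ) *
          (expansionCoeff₁ κ η + expansionCoeff₂ κ η * z * ((f ^ (-(2 : ℝ) / 3) : ℝ) : ℂ) +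
            expansionCoeff₃ κ η * ((f ^ ((1 : ℝ) / 3) : ℝ) : ℂ))‖ ≤
        C * f ^ (-(1 : ℝ) / 3) * (‖z‖ * f ^ (-(2 : ℝ) / 3) + f ^ ((1 : ℝ) / 3)) ^ 2 := by
  obtain ⟨C, hC, hbound⟩ := exists_norm_scaledDet_sub_le κ (Complex.ofReal_ne_zero.2 hη) R
    (f₀ ^ ((1 : ℝ) / 3))
  refine ⟨C, hC, fun f hf hff₀ z hz => ?_⟩
  have hinv : f ^ (-(1 : ℝ) / 3) = (f ^ ((1 : ℝ) / 3))⁻¹ := by rw [neg_div, Real.rpow_neg hf.le]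
  have hr : 0 < f ^ (-(2 : ℝ) / 3) := Real.rpow_pos_of_pos hf _
  have ht : 0 < f ^ ((1 : ℝ) / 3) := Real.rpow_pos_of_pos hf _
  have hu : ‖z‖ * f ^ (-(2 : ℝ) / 3) ≤ R :=
    calc ‖z‖ * f ^ (-(2 : ℝ) / 3) ≤ R * f ^ ((2 : ℝ) / 3) * f ^ (-(2 : ℝ) / 3) := by gcongr
      _ = R := by
        rw [mul_assoc, ← Real.rpow_add hf]
        norm_num
  have htf₀ : f ^ ((1 : ℝ) / 3) ≤ f₀ ^ ((1 : ℝ) / 3) := by gcongr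
  rw [Df_eq_scaledDet_div κ η hf, hinv, mul_assoc _ z]
  generalize f ^ (-(2 : ℝ) / 3) = r at *
  generalize f ^ ((1 : ℝ) / 3) = t at *
  have hnorm_u : ‖z * (r : ℂ)‖ = ‖z‖ * r := by rw [norm_mul, Complex.norm_of_nonneg hr.le]
  have hnorm_t : ‖(t : ℂ)‖ = t := Complex.norm_of_nonneg ht.le
  have h := hbound (z * r) t (hnorm_u.trans_le hu) (hnorm_t.trans_le htf₀)
  rw [hnorm_u, hnorm_t] at h
  have ht' : (t : ℂ) ≠ 0 := Complex.ofReal_ne_zero.2 ht.ne'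
  set P := expansionCoeff₁ κ η + expansionCoeff₂ κ η * (z * r) + expansionCoeff₃ κ η * t
  calc ‖scaledDet κ η (z * r) t / (t : ℂ) ^ 2 - ((t⁻¹ : ℝ) : ℂ) * P‖
      = ‖scaledDet κ η (z * r) t - t * P‖ / t ^ 2 := by
        rw [← hnorm_t, ← norm_pow, ← norm_div, hnorm_t, Complex.ofReal_inv]
        congr 1
        field_simp
    _ ≤ C * (t * (‖z‖ * r + t) ^ 2) / t ^ 2 := by gcongr
    _ = C * t⁻¹ * (‖z‖ * r + t) ^ 2 := by field_simp

end StarkAiry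

open StarkAiry in
theorem stmt17_general (κ η : ℝ) (hη : η ≠ 0) (hηκ : η + κ ≠ 0) :
    ∃ c₁ c₂ c₃ : ℂ, c₁ ≠ 0 ∧ ∀ f₀ R : ℝ, ∃ C > (0 : ℝ),
      ∀ f : ℝ, 0 < f → f < f₀ → ∀ z : ℂ, ‖z‖ ≤ R * f ^ ((2 : ℝ) / 3) →
        ‖Df κ η f z -
            ((f ^ (-(1 : ℝ) / 3) : ℝ) : ℂ) *
              (c₁ + c₂ * z * ((f ^ (-(2 : ℝ) / 3) : ℝ) : ℂ)
                + c₃ * ((f ^ ((1 : ℝ) / 3) : ℝ) : ℂ))‖ ≤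
          C * f ^ (-(1 : ℝ) / 3) *
            (‖z‖ * f ^ (-(2 : ℝ) / 3) + f ^ ((1 : ℝ) / 3)) ^ 2 :=
  ⟨expansionCoeff₁ κ η, expansionCoeff₂ κ η, expansionCoeff₃ κ η,
    expansionCoeff₁_ne_zero (Complex.ofReal_ne_zero.2 hη) (by exact_mod_cast hηκ),
    exists_norm_Df_sub_le κ hη⟩

/-- Expansion of `D_f` near the origin: for `|z| < f^{2/3+ε}`,
`D_f(z) = f^{−1/3}(c₁ + c₂·z·f^{−2/3} + c₃·f^{1/3}) + O(f^{−1/3}(|z|f^{−2/3} + f^{1/3})²)`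
with constants `cⱼ` depending only on `η` and `κ`, `c₁ ≠ 0`. -/
theorem stmt17 (κ η ε : ℝ) (hκ : 0 < κ) (hη : 0 < η) (hε : 0 < ε) :
    ∃ c₁ c₂ c₃ : ℂ, c₁ ≠ 0 ∧ ∃ C > (0 : ℝ), ∃ f₀ > (0 : ℝ),
      ∀ f : ℝ, 0 < f → f < f₀ → ∀ z : ℂ,
        ‖z‖ < f ^ (2 / 3 + ε) →
        ‖Df κ η f z -
            ((f ^ (-(1 : ℝ) / 3) : ℝ) : ℂ) *
              (c₁ + c₂ * z * ((f ^ (-(2 : ℝ) / 3) : ℝ) : ℂ)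
                + c₃ * ((f ^ ((1 : ℝ) / 3) : ℝ) : ℂ))‖ ≤
          C * f ^ (-(1 : ℝ) / 3) *
            (‖z‖ * f ^ (-(2 : ℝ) / 3) + f ^ ((1 : ℝ) / 3)) ^ 2 := by
  obtain ⟨c₁, c₂, c₃, hc₁, h⟩ := stmt17_general κ η hη.ne' (add_pos hη hκ).ne'
  obtain ⟨C, hC, hbound⟩ := h 1 1
  exact ⟨c₁, c₂, c₃, hc₁, C, hC, 1, one_pos, fun f hf hf₁ z hz => hbound f hf hf₁ z (hz.le.trans
    (by simpa using Real.rpow_le_rpow_of_exponent_ge hf hf₁.le (by linarith)))⟩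
end
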